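/- (Lemma 5.2, formula (beta+).) Uniformly over all λ ∈ C⁺ and all X ∈ a with x2 ≥ x3, one has V(λ)^{2k}·E_k(X,λ) ≍ ∫_{λ3}^{λ2} ∫_{λ2}^{λ1} [(ν1−ν2)(β_λ + β_X(ν1−λ3)(λ2−ν2)) / (1+β_X(ν1−ν2))^{k+1}] (λ1−ν1)(λ1−ν2) e^{(x2−x1)ν1 + (x3−x1)ν2} W_k(λ,ν) dν1 dν2. -/

import Mathlib

open Real MeasureTheory

/-- The rank-one Dunkl kernel `E_k^{rk1}(x,v)`. -/
noncomputable def Erk1 (k x v : ℝ) : ℝ :=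
  (Real.Gamma (k + 1/2) / (Real.sqrt Real.pi * Real.Gamma k)) *
    ∫ z in (-1 : ℝ)..1, Real.exp (z * x * v) * (1 - z) ^ (k - 1) * (1 + z) ^ k

/-- The normalized modified Bessel function `𝒥_a(y)`, for `a > -1/2`. -/
noncomputable def besselJ (a y : ℝ) : ℝ :=
  (Real.Gamma (a + 1) / (Real.sqrt Real.pi * Real.Gamma (a + 1/2))) *
    ∫ z in (-1 : ℝ)..1, Real.exp (y * z) * (1 - z ^ 2) ^ (a - 1/2)

/-- `W_k(λ,ν)`. -/
noncomputable def Wk (k l1 l2 l3 n1 n2 : ℝ) : ℝ :=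
  ((l1 - n1) * (l1 - n2) * (n1 - l2) * (l2 - n2) * (n1 - l3) * (n2 - l3)) ^ (k - 1)

/-- `V(λ) = (λ1-λ2)(λ1-λ3)(λ2-λ3)`. -/
def Vlam (l1 l2 l3 : ℝ) : ℝ := (l1 - l2) * (l1 - l3) * (l2 - l3)

/-- The `A₂` Dunkl kernel `E_k(X,λ)`, defined via the rank-one kernel formula. -/
noncomputable def EkA2 (k x1 x2 x3 l1 l2 l3 : ℝ) : ℝ :=
  (3 * Real.Gamma (3 * k) / (Vlam l1 l2 l3 ^ (2 * k) * Real.Gamma k ^ 2)) *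
    ∫ n2 in l3..l2, ∫ n1 in l2..l1,
      ((n1 - l2) * (l1 - n2) * Erk1 k ((x1 - x2) / 2) (n1 - n2)
        + (l1 - n1) * (l2 - n2) * Erk1 k (-(x1 - x2) / 2) (n1 - n2))
      * ((n1 - l3) * (n2 - l3)) * Real.exp ((x1 + x2 - 2 * x3) * (n1 + n2) / 2)
      * Wk k l1 l2 l3 n1 n2

/-!
The rank-one formula for `E_k(X, λ)` contains the rank-one kernel at `α_X (ν₁ - ν₂) / 2`, which has
no sign when only `β_X ≥ 0` is known. Writing the formula for `-w₀X` and `-w₀λ` instead, which does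
not change `E_k`, exchanges `α` and `β`: now the kernel is evaluated at `± β_X (ν₁ - ν₂) / 2`, and
its asymptotics `rankOne k t ≍ e^t (1 + 2t)^{-k}`, `rankOne k (-t) ≍ e^t (1 + 2t)^{-k-1}` for
`t ≥ 0` give the estimate of the integrands pointwise. The numerators add up by the identity
`(ν₁ - λ₃)(λ₂ - ν₂) + (ν₁ - λ₂)(ν₂ - λ₃) = (ν₁ - ν₂)(λ₂ - λ₃)`.

For the invariance of the formula under `-w₀`, apply it to all reorderings `wλ` of `λ`. An
integration by parts against `W_k(λ, ν) dν`, using that `λ₁, λ₂, λ₃` are the roots of one polynomial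
whose values at `ν₁` and `ν₂` form the weight, shows that the resulting six functions `u_w` satisfy
the Euler part `r u_w' = r ⟨X, wλ⟩ u_w - k ∑_σ (u_w + u_{wσ})` of the Dunkl system along every ray
`r ↦ rX`. The reflection term is dissipative, so the energy `∑_w u_w²` obeys a Gronwall inequality
and a solution that vanishes at `0` vanishes identically. The initial value must be alternating in
`w`, and is compared directly.
-/

open Set Filter Topology Asymptotics

lemma isTheta_comp_of_mapsTo {α β : Type*} {E F : Type*} [Norm E] [Norm F] {s : Set α} {t : Set β}
    {f : β → E} {g : β → F} (hfg : f =Θ[𝓟 t] g) {φ : α → β} (hφ : MapsTo φ s t) :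
    (fun x ↦ f (φ x)) =Θ[𝓟 s] fun x ↦ g (φ x) :=
  have hφ' : Tendsto φ (𝓟 s) (𝓟 t) := tendsto_principal_principal.2 hφ
  ⟨hfg.1.comp_tendsto hφ', hfg.2.comp_tendsto hφ'⟩

lemma isTheta_principal_of_le_of_le {α : Type*} {s : Set α} {f g : α → ℝ} {c C : ℝ} (hc : 0 < c)
    (hg : ∀ x ∈ s, 0 ≤ g x) (hcf : ∀ x ∈ s, c * g x ≤ f x) (hfC : ∀ x ∈ s, f x ≤ C * g x) :
    f =Θ[𝓟 s] g := by
  have hf : ∀ x ∈ s, 0 ≤ f x := fun x hx ↦ (mul_nonneg hc.le (hg x hx)).trans (hcf x hx)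
  refine ⟨isBigO_principal.2 ⟨C, fun x hx ↦ ?_⟩, isBigO_principal.2 ⟨c⁻¹, fun x hx ↦ ?_⟩⟩
  · rw [norm_of_nonneg (hf x hx), norm_of_nonneg (hg x hx)]
    exact hfC x hx
  · rw [norm_of_nonneg (hf x hx), norm_of_nonneg (hg x hx), le_inv_mul_iff₀ hc]
    exact hcf x hx

lemma exists_forall_le_and_le_of_isTheta_principal {α : Type*} {s : Set α} {f g : α → ℝ}
    (hfg : f =Θ[𝓟 s] g) (hf : ∀ x ∈ s, 0 ≤ f x) (hg : ∀ x ∈ s, 0 ≤ g x) :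
    ∃ C, 0 < C ∧ ∀ x ∈ s, C⁻¹ * g x ≤ f x ∧ f x ≤ C * g x := by
  obtain ⟨C₁, hC₁, h₁⟩ := hfg.1.exists_pos
  obtain ⟨C₂, hC₂, h₂⟩ := hfg.2.exists_pos
  rw [isBigOWith_principal] at h₁ h₂
  have hmax : 0 < max C₁ C₂ := hC₁.trans_le (le_max_left _ _)
  refine ⟨max C₁ C₂, hmax, fun x hx ↦ ⟨?_, ?_⟩⟩
  · have h := h₂ x hx
    rw [norm_of_nonneg (hf x hx), norm_of_nonneg (hg x hx)] at h
    rw [inv_mul_le_iff₀ hmax]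
    exact h.trans (mul_le_mul_of_nonneg_right (le_max_right _ _) (hf x hx))
  · have h := h₁ x hx
    rw [norm_of_nonneg (hf x hx), norm_of_nonneg (hg x hx)] at h
    exact h.trans (mul_le_mul_of_nonneg_right (le_max_left _ _) (hg x hx))

lemma isTheta_principal_add {α : Type*} {s : Set α} {f₁ f₂ g₁ g₂ : α → ℝ}
    (h₁ : f₁ =Θ[𝓟 s] g₁) (h₂ : f₂ =Θ[𝓟 s] g₂) (hf₁ : ∀ x ∈ s, 0 ≤ f₁ x)
    (hf₂ : ∀ x ∈ s, 0 ≤ f₂ x) (hg₁ : ∀ x ∈ s, 0 ≤ g₁ x) (hg₂ : ∀ x ∈ s, 0 ≤ g₂ x) :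
    (fun x ↦ f₁ x + f₂ x) =Θ[𝓟 s] fun x ↦ g₁ x + g₂ x := by
  have hf : (fun x ↦ ‖f₁ x‖ + ‖f₂ x‖) =ᶠ[𝓟 s] fun x ↦ f₁ x + f₂ x :=
    eventuallyEq_principal.2 fun x hx ↦ by
      simp only [norm_of_nonneg (hf₁ x hx), norm_of_nonneg (hf₂ x hx)]
  have hg : (fun x ↦ ‖g₁ x‖ + ‖g₂ x‖) =ᶠ[𝓟 s] fun x ↦ g₁ x + g₂ x :=
    eventuallyEq_principal.2 fun x hx ↦ by
      simp only [norm_of_nonneg (hg₁ x hx), norm_of_nonneg (hg₂ x hx)]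
  exact ⟨(h₁.1.add_add h₂.1).trans_eventuallyEq hg, (h₁.2.add_add h₂.2).trans_eventuallyEq hf⟩

lemma isBigO_principal_integral {ι α : Type*} [MeasurableSpace α] {s : Set ι} {t : ι → Set α}
    {μ : ι → Measure α} (hμ : ∀ i ∈ s, ∀ᵐ x ∂μ i, x ∈ t i) {f g : ι → α → ℝ}
    (hfg : (fun p : ι × α ↦ f p.1 p.2) =O[𝓟 {p | p.1 ∈ s ∧ p.2 ∈ t p.1}]
      fun p ↦ g p.1 p.2)
    (hg : ∀ i ∈ s, Integrable (g i) (μ i)) (hg₀ : ∀ i ∈ s, ∀ x ∈ t i, 0 ≤ g i x) :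
    (fun i ↦ ∫ x, f i x ∂μ i) =O[𝓟 s] fun i ↦ ∫ x, g i x ∂μ i := by
  obtain ⟨C, hC⟩ := isBigO_principal.1 hfg
  refine isBigO_principal.2 ⟨C, fun i hi ↦ ?_⟩
  rw [norm_of_nonneg (integral_nonneg_of_ae ((hμ i hi).mono (hg₀ i hi))), ← integral_const_mul]
  refine norm_integral_le_of_norm_le ((hg i hi).const_mul C) ((hμ i hi).mono fun x hx ↦ ?_)
  rw [← norm_of_nonneg (hg₀ i hi x hx)]
  exact hC (i, x) ⟨hi, hx⟩

lemma isTheta_principal_integral {ι α : Type*} [MeasurableSpace α] {s : Set ι} {t : ι → Set α}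
    {μ : ι → Measure α} (hμ : ∀ i ∈ s, ∀ᵐ x ∂μ i, x ∈ t i) {f g : ι → α → ℝ}
    (hfg : (fun p : ι × α ↦ f p.1 p.2) =Θ[𝓟 {p | p.1 ∈ s ∧ p.2 ∈ t p.1}]
      fun p ↦ g p.1 p.2)
    (hf : ∀ i ∈ s, Integrable (f i) (μ i)) (hf₀ : ∀ i ∈ s, ∀ x ∈ t i, 0 ≤ f i x)
    (hg : ∀ i ∈ s, Integrable (g i) (μ i)) (hg₀ : ∀ i ∈ s, ∀ x ∈ t i, 0 ≤ g i x) :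
    (fun i ↦ ∫ x, f i x ∂μ i) =Θ[𝓟 s] fun i ↦ ∫ x, g i x ∂μ i :=
  ⟨isBigO_principal_integral hμ hfg.1 hg hg₀, isBigO_principal_integral hμ hfg.2 hf hf₀⟩

lemma integrable_of_continuousOn_of_ae_mem {α E : Type*} [TopologicalSpace α] [T2Space α]
    [MeasurableSpace α] [OpensMeasurableSpace α] [NormedAddCommGroup E] {μ : Measure α}
    [IsFiniteMeasure μ] {K : Set α} (hK : IsCompact K) (hμ : ∀ᵐ x ∂μ, x ∈ K) {f : α → E}
    (hf : ContinuousOn f K) : Integrable f μ := by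
  have hfK : IntegrableOn f K μ := hf.integrableOn_compact hK
  rwa [IntegrableOn, Measure.restrict_eq_self_of_ae_mem hμ] at hfK

lemma hasDerivAt_integral_of_isCompact {α E : Type*} [TopologicalSpace α] [T2Space α]
    [MeasurableSpace α] [OpensMeasurableSpace α] [NormedAddCommGroup E] [NormedSpace ℝ E]
    {μ : Measure α} [IsFiniteMeasure μ] {K : Set α} (hK : IsCompact K) (hμ : ∀ᵐ x ∂μ, x ∈ K)
    {f f' : ℝ → α → E} (hf : ∀ t, Continuous (f t)) (hf' : Continuous (Function.uncurry f'))
    (hff' : ∀ t x, HasDerivAt (f · x) (f' t x) t) (t : ℝ) :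
    HasDerivAt (fun t ↦ ∫ x, f t x ∂μ) (∫ x, f' t x ∂μ) t := by
  obtain ⟨C, hC⟩ := ((isCompact_closedBall t 1).prod hK).exists_bound_of_continuousOn
    hf'.continuousOn
  have hf_int : ∀ s, Integrable (f s) μ := fun s ↦
    integrable_of_continuousOn_of_ae_mem hK hμ (hf s).continuousOn
  have hf'_int : Integrable (f' t) μ :=
    integrable_of_continuousOn_of_ae_mem hK hμ (hf'.comp (Continuous.prodMk_right t)).continuousOn
  refine (hasDerivAt_integral_of_dominated_loc_of_deriv_le (bound := fun _ ↦ C)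
    (Metric.closedBall_mem_nhds t one_pos) (.of_forall fun s ↦ (hf_int s).1) (hf_int t)
    hf'_int.1 ?_ (integrable_const C) (.of_forall fun x s _ ↦ hff' s x)).2
  filter_upwards [hμ] with x hx s hs using hC (s, x) ⟨hs, hx⟩

section WeightedMeasure

/-- The measure `w(x) dx` on the interval `(a, b)`. It is meant for weights that are nonnegative
there; negative values of `w` are replaced by `0`. -/
noncomputable def weightedMeasure (w : ℝ → ℝ) (a b : ℝ) : Measure ℝ :=
  (volume.restrict (Ioo a b)).withDensity fun x ↦ ENNReal.ofReal (w x)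

variable {w : ℝ → ℝ} {a b : ℝ}

instance (w : ℝ → ℝ) (a b : ℝ) : SFinite (weightedMeasure w a b) := by
  unfold weightedMeasure
  infer_instance

lemma ae_mem_Ioo_weightedMeasure (w : ℝ → ℝ) (a b : ℝ) :
    ∀ᵐ x ∂weightedMeasure w a b, x ∈ Ioo a b :=
  (withDensity_absolutelyContinuous _ _).ae_le (ae_restrict_mem measurableSet_Ioo)

lemma isFiniteMeasure_weightedMeasure (hw : IntervalIntegrable w volume a b) :
    IsFiniteMeasure (weightedMeasure w a b) :=
  isFiniteMeasure_withDensity_ofReal (hw.1.mono_set Ioo_subset_Ioc_self).2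

lemma integral_weightedMeasure (hab : a ≤ b) (hw : IntervalIntegrable w volume a b)
    (hw₀ : ∀ x ∈ Ioo a b, 0 ≤ w x) (f : ℝ → ℝ) :
    ∫ x, f x ∂weightedMeasure w a b = ∫ x in a..b, f x * w x := by
  have hw_meas : AEMeasurable w (volume.restrict (Ioo a b)) :=
    (hw.1.mono_set Ioo_subset_Ioc_self).1.aemeasurable
  rw [weightedMeasure, integral_withDensity_eq_integral_toReal_smul₀ hw_meas.ennreal_ofReal
    (.of_forall fun _ ↦ ENNReal.ofReal_lt_top), intervalIntegral.integral_of_le hab,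
    integral_Ioc_eq_integral_Ioo]
  refine setIntegral_congr_fun measurableSet_Ioo fun x hx ↦ ?_
  simp only [ENNReal.toReal_ofReal (hw₀ x hx), smul_eq_mul, mul_comm]

lemma map_neg_weightedMeasure (w : ℝ → ℝ) (a b : ℝ) :
    (weightedMeasure w a b).map Neg.neg = weightedMeasure (fun x ↦ w (-x)) (-b) (-a) := by
  ext s hs
  rw [Measure.map_apply measurable_neg hs, weightedMeasure, weightedMeasure,
    withDensity_apply _ (measurable_neg hs), withDensity_apply _ hs,
    Measure.restrict_restrict (measurable_neg hs), Measure.restrict_restrict hs,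
    ← (Measure.measurePreserving_neg volume).setLIntegral_comp_preimage_emb
      (MeasurableEquiv.neg ℝ).measurableEmbedding]
  simp only [neg_neg, preimage_inter, neg_preimage, neg_Ioo]

lemma intervalIntegrable_rpow_sub_mul_rpow_sub {s t : ℝ} (hab : a ≤ b) (hs : -1 < s)
    (ht : -1 < t) : IntervalIntegrable (fun x ↦ (x - a) ^ s * (b - x) ^ t) volume a b := by
  rcases hab.eq_or_lt with rfl | hab
  · exact .refl
  obtain ⟨m, hm⟩ := exists_between hab
  have left : IntervalIntegrable (fun x ↦ (x - a) ^ s) volume a m := by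
    simpa using
      (intervalIntegral.intervalIntegrable_rpow' (a := 0) (b := m - a) hs).comp_sub_right a
  have right : IntervalIntegrable (fun x ↦ (b - x) ^ t) volume m b := by
    simpa using
      (intervalIntegral.intervalIntegrable_rpow' (a := b - m) (b := 0) ht).comp_sub_left b
  refine (left.mul_continuousOn ?_).trans (right.continuousOn_mul ?_)
  · refine ContinuousOn.rpow_const (by fun_prop) fun x hx ↦ .inl (sub_pos.2 ?_).ne'
    exact (uIcc_of_le hm.1.le ▸ hx).2.trans_lt hm.2
  · refine ContinuousOn.rpow_const (by fun_prop) fun x hx ↦ .inl (sub_pos.2 ?_).ne'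
    exact hm.1.trans_le (uIcc_of_le hm.2.le ▸ hx).1

lemma intervalIntegrable_abs_rpow_of_eq_mul {f h : ℝ → ℝ} {r : ℝ} (hab : a ≤ b) (hr : -1 < r)
    (hh : ContinuousOn h (Icc a b)) (hh₀ : ∀ x ∈ Icc a b, h x ≠ 0)
    (hf : ∀ x, f x = (x - a) * (b - x) * h x) :
    IntervalIntegrable (fun x ↦ |f x| ^ r) volume a b := by
  have hcont : ContinuousOn (fun x ↦ |h x| ^ r) (uIcc a b) := by
    rw [uIcc_of_le hab]
    exact hh.abs.rpow_const fun x hx ↦ .inl (abs_ne_zero.2 (hh₀ x hx))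
  refine ((intervalIntegrable_rpow_sub_mul_rpow_sub hab hr hr).mul_continuousOn hcont).congr ?_
  intro x hx
  rw [uIoc_of_le hab] at hx
  have hxa : 0 ≤ x - a := sub_nonneg.2 hx.1.le
  have hxb : 0 ≤ b - x := sub_nonneg.2 hx.2
  simp only [hf, abs_mul, abs_of_nonneg hxa, abs_of_nonneg hxb]
  rw [Real.mul_rpow (by positivity) (abs_nonneg _), Real.mul_rpow hxa hxb]

/-- Integration by parts: `(f ^ k * g)' = f ^ (k - 1) * (f * g' + k * f' * g)`, and `f ^ k` vanishes
at the end points. -/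
lemma integral_weightedMeasure_rpow_mul_deriv_add_deriv_mul {k : ℝ} (hk : 0 < k) (hab : a ≤ b)
    {f f' g g' : ℝ → ℝ} (hf_int : IntervalIntegrable (fun x ↦ |f x| ^ (k - 1)) volume a b)
    (hf : ∀ x, HasDerivAt f (f' x) x) (hf' : Continuous f') (hg : ∀ x, HasDerivAt g (g' x) x)
    (hg' : Continuous g') (hf_pos : ∀ x ∈ Ioo a b, 0 < f x) (hfa : f a = 0) (hfb : f b = 0) :
    ∫ x, (f x * g' x + k * f' x * g x) ∂weightedMeasure (fun x ↦ |f x| ^ (k - 1)) a b = 0 := by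
  have hf_cont : Continuous f := continuous_iff_continuousAt.2 fun x ↦ (hf x).continuousAt
  have hg_cont : Continuous g := continuous_iff_continuousAt.2 fun x ↦ (hg x).continuousAt
  have hderiv : ∀ x ∈ Ioo a b, HasDerivAt (fun x ↦ f x ^ k * g x)
      ((f x * g' x + k * f' x * g x) * |f x| ^ (k - 1)) x := by
    intro x hx
    have hfx := hf_pos x hx
    have hpow : f x ^ k = f x * f x ^ (k - 1) := by
      rw [← Real.rpow_one_add' hfx.le (by simpa using hk.ne'), add_sub_cancel]
    refine (((hf x).rpow_const (p := k) (.inl hfx.ne')).mul (hg x)).congr_deriv ?_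
    rw [hpow, abs_of_pos hfx]
    ring
  rw [integral_weightedMeasure hab hf_int fun x _ ↦ by positivity,
    intervalIntegral.integral_eq_sub_of_hasDerivAt_of_le hab ?_ hderiv ?_]
  · simp [hfa, hfb, Real.zero_rpow hk.ne']
  · exact ((hf_cont.rpow_const fun _ ↦ .inr hk.le).mul hg_cont).continuousOn
  · exact hf_int.continuousOn_mul (by fun_prop)

end WeightedMeasure

section ReflectionSystem

variable {ι κ : Type*} [Fintype κ]

lemma two_mul_sum_mul_add_comp_perm [Fintype ι] (e : Equiv.Perm ι) (u : ι → ℝ) :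
    2 * ∑ i, u i * (u i + u (e i)) = ∑ i, (u i + u (e i)) ^ 2 := by
  have hperm : ∑ i, u (e i) ^ 2 = ∑ i, u i ^ 2 := Equiv.sum_comp e (u · ^ 2)
  have hexpand : ∑ i, (u i + u (e i)) ^ 2
      = ∑ i, (2 * (u i * (u i + u (e i))) + (u (e i) ^ 2 - u i ^ 2)) :=
    Finset.sum_congr rfl fun i _ ↦ by ring
  rw [hexpand, Finset.sum_add_distrib, Finset.sum_sub_distrib, hperm, sub_self, add_zero,
    Finset.mul_sum]

lemma sum_mul_sum_add_comp_perm_nonneg [Fintype ι] (e : κ → Equiv.Perm ι) (u : ι → ℝ) :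
    0 ≤ ∑ i, u i * ∑ j, (u i + u (e j i)) := by
  simp only [Finset.mul_sum]
  rw [Finset.sum_comm]
  refine Finset.sum_nonneg fun j _ ↦ ?_
  have : 0 ≤ ∑ i, (u i + u (e j i)) ^ 2 := by positivity
  linarith [two_mul_sum_mul_add_comp_perm (e j) u]

lemma comp_perm_eq_neg_of_sum_eq_zero [Finite ι] {e : κ → Equiv.Perm ι} {u : ι → ℝ}
    (h : ∀ i, ∑ j, (u i + u (e j i)) = 0) (j : κ) (i : ι) : u (e j i) = -u i := by
  have := Fintype.ofFinite ι
  have hsq : ∑ j, ∑ i, (u i + u (e j i)) ^ 2 = 0 := by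
    simp only [← two_mul_sum_mul_add_comp_perm, ← Finset.mul_sum]
    rw [Finset.sum_comm]
    simp only [← Finset.mul_sum, h, mul_zero, Finset.sum_const_zero]
  rw [Finset.sum_eq_zero_iff_of_nonneg fun _ _ ↦ by positivity] at hsq
  have hj := hsq j (Finset.mem_univ j)
  rw [Finset.sum_eq_zero_iff_of_nonneg fun _ _ ↦ by positivity] at hj
  linarith [pow_eq_zero_iff two_ne_zero |>.1 (hj i (Finset.mem_univ i))]

lemma nonpos_of_hasDerivAt_le_mul {f f' : ℝ → ℝ} {K r : ℝ} (hf : ∀ s, HasDerivAt f (f' s) s)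
    (hle : ∀ s, 0 ≤ s → f' s ≤ K * f s) (h₀ : f 0 ≤ 0) (hr : 0 ≤ r) : f r ≤ 0 := by
  have h := le_gronwallBound_of_liminf_deriv_right_le (δ := 0) (K := K) (ε := 0) (a := 0) (b := r)
    (fun s _ ↦ (hf s).continuousAt.continuousWithinAt)
    (fun s _ c hc ↦ (hf s).hasDerivWithinAt.liminf_right_slope_le hc) h₀
    (fun s hs ↦ by simpa using hle s hs.1) r ⟨hr, le_rfl⟩
  rwa [gronwallBound_ε0_δ0] at h

lemma sum_mul_le_of_reflection_system [Fintype ι] {k s : ℝ} (hk : 0 ≤ k) (hs : 0 < s)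
    (e : κ → Equiv.Perm ι) {m u u' : ι → ℝ}
    (hsystem : ∀ i, s * u' i = s * m i * u i - k * ∑ j, (u i + u (e j i))) :
    ∑ i, u i * u' i ≤ (∑ i, |m i|) * ∑ i, u i ^ 2 := by
  have hmul : s * ∑ i, u i * u' i
      = s * ∑ i, m i * u i ^ 2 - k * ∑ i, u i * ∑ j, (u i + u (e j i)) := by
    simp only [Finset.mul_sum (s := Finset.univ (α := ι)), ← Finset.sum_sub_distrib]
    exact Finset.sum_congr rfl fun i _ ↦ by linear_combination u i * hsystem i
  have hdissipation := mul_nonneg hk (sum_mul_sum_add_comp_perm_nonneg e u)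
  calc ∑ i, u i * u' i
      ≤ ∑ i, m i * u i ^ 2 := le_of_mul_le_mul_left (by linarith) hs
    _ ≤ (∑ i, |m i|) * ∑ i, u i ^ 2 := by
      rw [Finset.mul_sum]
      gcongr with i
      exact (le_abs_self _).trans
        (Finset.single_le_sum (f := fun i ↦ |m i|) (fun _ _ ↦ abs_nonneg _) (Finset.mem_univ i))

lemma eq_zero_of_reflection_system [Finite ι] {k : ℝ} (hk : 0 ≤ k) (e : κ → Equiv.Perm ι)
    (m : ι → ℝ) {u u' : ι → ℝ → ℝ} (hu : ∀ i r, HasDerivAt (u i) (u' i r) r)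
    (hsystem : ∀ i r, 0 < r →
      r * u' i r = r * m i * u i r - k * ∑ j, (u i r + u (e j i) r))
    (h₀ : ∀ i, u i 0 = 0) {r : ℝ} (hr : 0 ≤ r) (i : ι) : u i r = 0 := by
  have := Fintype.ofFinite ι
  have henergy (s : ℝ) :
      HasDerivAt (fun s ↦ ∑ i, u i s ^ 2) (2 * ∑ i, u i s * u' i s) s :=
    (HasDerivAt.fun_sum fun i _ ↦ (hu i s).fun_pow 2).congr_deriv <| by
      rw [Finset.mul_sum]
      exact Finset.sum_congr rfl fun i _ ↦ by ring
  have hgrowth (s : ℝ) (hs : 0 ≤ s) :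
      2 * ∑ i, u i s * u' i s ≤ 2 * (∑ i, |m i|) * ∑ i, u i s ^ 2 := by
    rcases hs.eq_or_lt with rfl | hs
    · simp [h₀]
    · linarith [sum_mul_le_of_reflection_system hk hs e (hsystem · s hs)]
  have hle := nonpos_of_hasDerivAt_le_mul henergy hgrowth (by simp [h₀]) hr
  have hsum := hle.antisymm (Finset.sum_nonneg fun i _ ↦ sq_nonneg (u i r))
  rw [Finset.sum_eq_zero_iff_of_nonneg fun _ _ ↦ sq_nonneg _] at hsum
  exact pow_eq_zero_iff two_ne_zero |>.1 (hsum i (Finset.mem_univ i))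

end ReflectionSystem

section Kummer

/-- The confluent hypergeometric integral `∫₀¹ e^{-sy} y^{p-1} (1-y)^{q-1} dy`, that is
`B(p, q) M(p, p + q, -s)` with `M` Kummer's function. The exponents follow the convention of the
beta integral. -/
noncomputable def kummerIntegral (p q s : ℝ) : ℝ :=
  ∫ y in (0 : ℝ)..1, exp (-(s * y)) * (y ^ (p - 1) * (1 - y) ^ (q - 1))

variable {p q : ℝ}

lemma intervalIntegrable_beta (hp : 0 < p) (hq : 0 < q) :
    IntervalIntegrable (fun y : ℝ ↦ y ^ (p - 1) * (1 - y) ^ (q - 1)) volume 0 1 := by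
  simpa using intervalIntegrable_rpow_sub_mul_rpow_sub (a := 0) (s := p - 1) (t := q - 1)
    zero_le_one (by linarith) (by linarith)

lemma intervalIntegrable_kummer (hp : 0 < p) (hq : 0 < q) (s : ℝ) :
    IntervalIntegrable (fun y ↦ exp (-(s * y)) * (y ^ (p - 1) * (1 - y) ^ (q - 1)))
      volume 0 1 :=
  (intervalIntegrable_beta hp hq).continuousOn_mul (by fun_prop)

lemma hasDerivAt_kummerIntegral (hp : 0 < p) (hq : 0 < q) (s : ℝ) :
    HasDerivAt (kummerIntegral p q) (-kummerIntegral (p + 1) q s) s := by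
  have hint := intervalIntegrable_beta hp hq
  have hfin := isFiniteMeasure_weightedMeasure hint
  have hnonneg : ∀ y ∈ Ioo (0 : ℝ) 1, 0 ≤ y ^ (p - 1) * (1 - y) ^ (q - 1) := fun y hy ↦
    mul_nonneg (rpow_nonneg hy.1.le _) (rpow_nonneg (sub_nonneg.2 hy.2.le) _)
  have h := hasDerivAt_integral_of_isCompact isCompact_Icc
    ((ae_mem_Ioo_weightedMeasure _ _ _).mono fun _ hy ↦ Ioo_subset_Icc_self hy)
    (μ := weightedMeasure (fun y ↦ y ^ (p - 1) * (1 - y) ^ (q - 1)) 0 1)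
    (f := fun s y ↦ exp (-(s * y))) (f' := fun s y ↦ -(exp (-(s * y)) * y))
    (by fun_prop) (by fun_prop)
    (fun s y ↦ by simpa using (((hasDerivAt_id s).mul_const y).neg).exp) s
  simp only [integral_weightedMeasure zero_le_one hint hnonneg] at h
  refine h.congr_deriv ?_
  rw [kummerIntegral, ← intervalIntegral.integral_neg]
  refine intervalIntegral.integral_congr_Ioo_of_le zero_le_one fun y hy ↦ ?_
  simp only [add_sub_right_comm p, rpow_add_one hy.1.ne']
  ring

lemma kummerIntegral_neg (p q s : ℝ) :
    kummerIntegral p q (-s) = exp s * kummerIntegral q p s := by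
  have h := intervalIntegral.integral_comp_sub_left (a := 0) (b := 1)
    (fun y ↦ exp (s * y) * (y ^ (p - 1) * (1 - y) ^ (q - 1))) 1
  simp only [sub_self, sub_zero, sub_sub_cancel] at h
  simp only [kummerIntegral, neg_mul, neg_neg, ← h, ← intervalIntegral.integral_const_mul]
  congr 1 with y
  rw [show s * (1 - y) = s + -(s * y) by ring, exp_add]
  ring

lemma mul_kummerIntegral_add_one_add_one (hp : 0 < p) (hq : 0 < q) (s : ℝ) :
    s * kummerIntegral (p + 1) (q + 1) s
      = p * kummerIntegral p (q + 1) s - q * kummerIntegral (p + 1) q s := by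
  have hderiv : ∀ y ∈ Ioo (0 : ℝ) 1, HasDerivAt (fun y ↦ exp (-(s * y)) * (y ^ p * (1 - y) ^ q))
      (p * (exp (-(s * y)) * (y ^ (p - 1) * (1 - y) ^ (q + 1 - 1)))
        - q * (exp (-(s * y)) * (y ^ (p + 1 - 1) * (1 - y) ^ (q - 1)))
        - s * (exp (-(s * y)) * (y ^ (p + 1 - 1) * (1 - y) ^ (q + 1 - 1)))) y := by
    intro y hy
    have hexp := (((hasDerivAt_id y).const_mul s).neg).exp
    have hleft := (hasDerivAt_id y).rpow_const (p := p) (.inl hy.1.ne')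
    have hright := ((hasDerivAt_id y).const_sub 1).rpow_const (p := q) (.inl (sub_pos.2 hy.2).ne')
    refine (hexp.mul (hleft.mul hright)).congr_deriv ?_
    simp only [id_eq, add_sub_cancel_right, Pi.mul_apply, Pi.neg_apply]
    ring
  have hp' : 0 < p + 1 := by positivity
  have hq' : 0 < q + 1 := by positivity
  have hint₁ := (intervalIntegrable_kummer hp hq' s).const_mul p
  have hint₂ := (intervalIntegrable_kummer hp' hq s).const_mul q
  have hint₃ := (intervalIntegrable_kummer hp' hq' s).const_mul s
  have hcont : Continuous fun y : ℝ ↦ exp (-(s * y)) * (y ^ p * (1 - y) ^ q) := by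
    have hleft := continuous_id.rpow_const fun _ : ℝ ↦ .inr hp.le
    have hright := (continuous_sub_left (1 : ℝ)).rpow_const fun _ ↦ .inr hq.le
    exact (by fun_prop : Continuous fun y ↦ exp (-(s * y))).mul (hleft.mul hright)
  have h := intervalIntegral.integral_eq_sub_of_hasDerivAt_of_le zero_le_one hcont.continuousOn
    hderiv ((hint₁.sub hint₂).sub hint₃)
  rw [intervalIntegral.integral_sub (hint₁.sub hint₂) hint₃,
    intervalIntegral.integral_sub hint₁ hint₂] at h
  simp only [intervalIntegral.integral_const_mul, sub_self, zero_rpow hp.ne', zero_rpow hq.ne',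
    zero_mul, mul_zero] at h
  simp only [kummerIntegral]
  linarith

lemma rpow_mem_Icc_rpow_abs {c x : ℝ} (hc : 0 < c) (hx : x ∈ Icc c 1) (r : ℝ) :
    x ^ r ∈ Icc (c ^ |r|) (c ^ (-|r|)) := by
  have hx₀ : 0 < x := hc.trans_le hx.1
  have hlog : |log x * r| ≤ -(log c * |r|) := by
    rw [abs_mul, abs_of_nonpos (log_nonpos hx₀.le hx.2), neg_mul]
    exact neg_le_neg (mul_le_mul_of_nonneg_right (log_le_log hc hx.1) (abs_nonneg r))
  rw [rpow_def_of_pos hx₀, rpow_def_of_pos hc, rpow_def_of_pos hc, mul_neg]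
  exact ⟨exp_le_exp.2 (neg_le_neg_iff.1 ((neg_le_abs _).trans hlog)),
    exp_le_exp.2 ((le_abs_self _).trans hlog)⟩

lemma one_add_rpow_le_mul_exp {a s : ℝ} (hp : 0 < p) (ha : 0 < a) (hs : 0 ≤ s) :
    (1 + s) ^ p ≤ (1 + p / a) ^ p * exp (a * s) := by
  have hbase : 1 + s ≤ (1 + p / a) * (1 + a * s / p) := by
    have : (1 + p / a) * (1 + a * s / p) = 1 + s + (a * s / p + p / a) := by field_simp; ring
    rw [this]
    exact le_add_of_nonneg_right (by positivity)
  calc (1 + s) ^ p ≤ ((1 + p / a) * (1 + a * s / p)) ^ p := by gcongr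
    _ = (1 + p / a) ^ p * (1 + a * s / p) ^ p := mul_rpow (by positivity) (by positivity)
    _ ≤ (1 + p / a) ^ p * exp (a * s / p) ^ p := by
      gcongr
      rw [add_comm]
      exact add_one_le_exp _
    _ = (1 + p / a) ^ p * exp (a * s) := by rw [← exp_mul, div_mul_cancel₀ _ hp.ne']

lemma intervalIntegrable_rpow_mul_exp (hp : 0 < p) (s : ℝ) :
    IntervalIntegrable (fun y ↦ y ^ (p - 1) * exp (-(s * y))) volume 0 1 :=
  (intervalIntegral.intervalIntegrable_rpow' (by linarith)).mul_continuousOn (by fun_prop)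

lemma integral_rpow_mul_exp_le (hp : 0 < p) {s : ℝ} (hs : 0 < s) :
    ∫ y in (0 : ℝ)..1, y ^ (p - 1) * exp (-(s * y)) ≤ Gamma p * s ^ (-p) := by
  have hint : IntegrableOn (fun y ↦ y ^ (p - 1) * exp (-(s * y))) (Ioi 0) := by
    simpa using integrableOn_rpow_mul_exp_neg_mul_rpow (s := p - 1) (p := 1) (b := s)
      (by linarith) one_pos hs
  calc ∫ y in (0 : ℝ)..1, y ^ (p - 1) * exp (-(s * y))
      ≤ ∫ y in Ioi (0 : ℝ), y ^ (p - 1) * exp (-(s * y)) := by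
        rw [intervalIntegral.integral_of_le zero_le_one]
        refine setIntegral_mono_set hint ?_ (Ioc_subset_Ioi_self.eventuallyLE)
        filter_upwards [ae_restrict_mem measurableSet_Ioi] with y hy
        exact mul_nonneg (rpow_nonneg (mem_Ioi.1 hy).le _) (exp_pos _).le
    _ = Gamma p * s ^ (-p) := by
      rw [integral_rpow_mul_exp_neg_mul_Ioi hp hs, one_div, inv_rpow hs.le, rpow_neg hs.le,
        mul_comm]

/-- Near `y = 0` the factor `(1 - y) ^ (q - 1)` is bounded, and for `y ≥ 1 / 2` the exponential
beats every power of `1 + s`. -/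
lemma kummerIntegrand_le (hp : 0 < p) {s y : ℝ} (hs : 0 ≤ s) (hy : y ∈ Ioo (0 : ℝ) 1) :
    exp (-(s * y)) * (y ^ (p - 1) * (1 - y) ^ (q - 1))
      ≤ (1 / 2) ^ (-|q - 1|) * exp 1 * (y ^ (p - 1) * exp (-((1 + s) * y)))
        + (1 + 2 * p) ^ p * (1 + s) ^ (-p) * (y ^ (p - 1) * (1 - y) ^ (q - 1)) := by
  have hy₁ : 0 < 1 - y := sub_pos.2 hy.2
  have hy₀ := hy.1
  rcases le_or_gt y (1 / 2) with h | h
  · have hpow : (1 - y) ^ (q - 1) ≤ (1 / 2) ^ (-|q - 1|) :=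
      (rpow_mem_Icc_rpow_abs (by norm_num) ⟨by linarith, by linarith⟩ _).2
    have hexp : exp (-(s * y)) ≤ exp 1 * exp (-((1 + s) * y)) := by
      rw [← exp_add]
      exact exp_le_exp.2 (by linarith [hy.2])
    calc exp (-(s * y)) * (y ^ (p - 1) * (1 - y) ^ (q - 1))
        ≤ exp 1 * exp (-((1 + s) * y)) * (y ^ (p - 1) * (1 / 2) ^ (-|q - 1|)) := by gcongr
      _ = (1 / 2) ^ (-|q - 1|) * exp 1 * (y ^ (p - 1) * exp (-((1 + s) * y))) := by ring
      _ ≤ _ := le_add_of_nonneg_right (by positivity)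
  · have hexp : exp (-(s * y)) ≤ (1 + 2 * p) ^ p * (1 + s) ^ (-p) := by
      rw [exp_neg, rpow_neg (by positivity), inv_le_iff_one_le_mul₀ (exp_pos _), mul_right_comm,
        ← div_eq_mul_inv, one_le_div (by positivity)]
      refine (one_add_rpow_le_mul_exp hp one_half_pos hs).trans ?_
      rw [show p / (1 / 2) = 2 * p by ring, mul_comm (1 / 2)]
      gcongr
    refine (mul_le_mul_of_nonneg_right hexp (by positivity)).trans ?_
    exact le_add_of_nonneg_left (by positivity)

lemma kummerIntegral_le (hp : 0 < p) (hq : 0 < q) {s : ℝ} (hs : 0 ≤ s) :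
    kummerIntegral p q s ≤ ((1 / 2) ^ (-|q - 1|) * exp 1 * Gamma p
      + (1 + 2 * p) ^ p * kummerIntegral p q 0) * (1 + s) ^ (-p) := by
  have hint₁ := (intervalIntegrable_rpow_mul_exp hp (1 + s)).const_mul
    ((1 / 2) ^ (-|q - 1|) * exp 1)
  have hint₂ := (intervalIntegrable_beta hp hq).const_mul ((1 + 2 * p) ^ p * (1 + s) ^ (-p))
  have hmono := intervalIntegral.integral_mono_on_of_le_Ioo zero_le_one
    (intervalIntegrable_kummer hp hq s) (hint₁.add hint₂) fun y hy ↦ kummerIntegrand_le hp hs hy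
  have hzero : kummerIntegral p q 0 = ∫ y in (0 : ℝ)..1, y ^ (p - 1) * (1 - y) ^ (q - 1) := by
    simp [kummerIntegral]
  have hgamma := integral_rpow_mul_exp_le hp (by positivity : 0 < 1 + s)
  rw [intervalIntegral.integral_add hint₁ hint₂, intervalIntegral.integral_const_mul,
    intervalIntegral.integral_const_mul, ← hzero] at hmono
  calc kummerIntegral p q s ≤ _ := hmono
    _ ≤ (1 / 2) ^ (-|q - 1|) * exp 1 * (Gamma p * (1 + s) ^ (-p))
        + (1 + 2 * p) ^ p * (1 + s) ^ (-p) * kummerIntegral p q 0 := by gcongr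
    _ = _ := by ring

lemma le_kummerIntegral (hp : 0 < p) (hq : 0 < q) {s : ℝ} (hs : 0 ≤ s) :
    exp (-1) * (1 / 2) ^ |q - 1| * (2 ^ (-p) / p) * (1 + s) ^ (-p) ≤ kummerIntegral p q s := by
  obtain ⟨δ, hδ⟩ : ∃ δ, δ = (2 * (1 + s))⁻¹ := ⟨_, rfl⟩
  have hδ₀ : 0 < δ := by rw [hδ]; positivity
  have hδ₁ : 2 * (1 + s) * δ = 1 := by rw [hδ]; exact mul_inv_cancel₀ (by positivity)
  have hδ₂ : δ ≤ 1 / 2 := by nlinarith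
  have hbound : ∀ y ∈ Ioo 0 δ, exp (-1) * (1 / 2) ^ |q - 1| * y ^ (p - 1)
      ≤ exp (-(s * y)) * (y ^ (p - 1) * (1 - y) ^ (q - 1)) := by
    intro y hy
    have hy₀ := hy.1
    have hsy : s * y ≤ 1 := by nlinarith [mul_le_mul_of_nonneg_left hy.2.le hs]
    have hpow : (1 / 2) ^ |q - 1| ≤ (1 - y) ^ (q - 1) :=
      (rpow_mem_Icc_rpow_abs (by norm_num) ⟨by linarith [hy.2], by linarith⟩ _).1
    rw [mul_assoc, mul_comm (_ ^ |q - 1|)]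
    gcongr
  calc exp (-1) * (1 / 2) ^ |q - 1| * (2 ^ (-p) / p) * (1 + s) ^ (-p)
      = ∫ y in (0 : ℝ)..δ, exp (-1) * (1 / 2) ^ |q - 1| * y ^ (p - 1) := by
        rw [intervalIntegral.integral_const_mul, integral_rpow (.inl (by linarith)),
          sub_add_cancel, zero_rpow hp.ne', sub_zero, hδ, inv_rpow (by positivity),
          ← rpow_neg (by positivity), mul_rpow (by norm_num) (by positivity)]
        ring
    _ ≤ ∫ y in (0 : ℝ)..δ, exp (-(s * y)) * (y ^ (p - 1) * (1 - y) ^ (q - 1)) := by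
      refine intervalIntegral.integral_mono_on_of_le_Ioo hδ₀.le
        ((intervalIntegral.intervalIntegrable_rpow' (by linarith)).const_mul _) ?_ hbound
      refine (intervalIntegrable_kummer hp hq s).mono_set ?_
      rw [uIcc_of_le hδ₀.le, uIcc_of_le zero_le_one]
      exact Icc_subset_Icc_right (by linarith)
    _ ≤ kummerIntegral p q s := by
      refine intervalIntegral.integral_mono_interval le_rfl hδ₀.le (by linarith) ?_
        (intervalIntegrable_kummer hp hq s)
      filter_upwards [ae_restrict_mem measurableSet_Ioc] with y hy
      exact mul_nonneg (exp_pos _).le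
        (mul_nonneg (rpow_nonneg hy.1.le _) (rpow_nonneg (sub_nonneg.2 hy.2) _))

lemma kummerIntegral_isTheta (hp : 0 < p) (hq : 0 < q) :
    kummerIntegral p q =Θ[𝓟 (Ici 0)] fun s ↦ (1 + s) ^ (-p) :=
  isTheta_principal_of_le_of_le (c := exp (-1) * (1 / 2) ^ |q - 1| * (2 ^ (-p) / p))
    (by positivity) (fun s hs ↦ rpow_nonneg (add_nonneg zero_le_one hs) _)
    (fun _ hs ↦ le_kummerIntegral hp hq hs) fun _ hs ↦ kummerIntegral_le hp hq hs

end Kummer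

section RankOne

/-- The rank-one Dunkl kernel `E_k^{rk1}(1, t)` without its normalising constant, see
`Erk1_eq_rankOne`. -/
noncomputable def rankOne (k t : ℝ) : ℝ := exp t * kummerIntegral k (k + 1) (2 * t)

/-- The even function `rankOne k - (rankOne k)'`. The rank-one Dunkl equation says that it equals
`k * (rankOne k t - rankOne k (-t)) / t`. -/
noncomputable def rankOneDefect (k t : ℝ) : ℝ :=
  2 * exp t * kummerIntegral (k + 1) (k + 1) (2 * t)

lemma rankOne_neg (k t : ℝ) : rankOne k (-t) = exp t * kummerIntegral (k + 1) k (2 * t) := by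
  rw [rankOne, mul_neg, kummerIntegral_neg, ← mul_assoc, ← exp_add]
  ring_nf

lemma rankOneDefect_neg (k t : ℝ) : rankOneDefect k (-t) = rankOneDefect k t := by
  rw [rankOneDefect, mul_neg, kummerIntegral_neg, mul_assoc, ← mul_assoc (exp (-t)), ← exp_add,
    rankOneDefect]
  ring_nf

lemma rankOne_nonneg (k t : ℝ) : 0 ≤ rankOne k t :=
  mul_nonneg (exp_pos t).le <| intervalIntegral.integral_nonneg zero_le_one fun _ hy ↦
    mul_nonneg (exp_pos _).le
      (mul_nonneg (rpow_nonneg hy.1 _) (rpow_nonneg (sub_nonneg.2 hy.2) _))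

variable {k : ℝ}

lemma hasDerivAt_rankOne (hk : 0 < k) (t : ℝ) :
    HasDerivAt (rankOne k) (rankOne k t - rankOneDefect k t) t := by
  have hkummer := (hasDerivAt_kummerIntegral hk (by positivity : 0 < k + 1) (2 * t)).comp t
    ((hasDerivAt_id t).const_mul 2)
  refine ((hasDerivAt_exp t).mul hkummer).congr_deriv ?_
  simp only [Function.comp_apply, rankOne, rankOneDefect]
  ring

lemma continuous_rankOne (hk : 0 < k) : Continuous (rankOne k) :=
  continuous_iff_continuousAt.2 fun t ↦ (hasDerivAt_rankOne hk t).continuousAt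

lemma continuous_rankOneDefect (hk : 0 < k) : Continuous (rankOneDefect k) := by
  have hk' : 0 < k + 1 := by positivity
  have hkummer : Continuous (kummerIntegral (k + 1) (k + 1)) :=
    continuous_iff_continuousAt.2 fun s ↦ (hasDerivAt_kummerIntegral hk' hk' s).continuousAt
  unfold rankOneDefect
  fun_prop

lemma mul_rankOneDefect (hk : 0 < k) (t : ℝ) :
    t * rankOneDefect k t = k * (rankOne k t - rankOne k (-t)) := by
  rw [rankOne_neg, rankOneDefect, rankOne]
  linear_combination exp t * mul_kummerIntegral_add_one_add_one hk hk (2 * t)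

lemma Erk1_eq_rankOne (k x v : ℝ) : Erk1 k x v =
    Gamma (k + 1 / 2) / (√π * Gamma k) * 2 ^ (2 * k) * rankOne k (x * v) := by
  have hsubst := intervalIntegral.integral_comp_sub_mul (a := 0) (b := 1)
    (fun z ↦ exp (z * x * v) * (1 - z) ^ (k - 1) * (1 + z) ^ k) two_ne_zero (1 : ℝ)
  norm_num only [smul_eq_mul] at hsubst
  rw [Erk1, mul_assoc _ (2 ^ (2 * k))]
  congr 1
  calc ∫ z in (-1 : ℝ)..1, exp (z * x * v) * (1 - z) ^ (k - 1) * (1 + z) ^ k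
      = 2 * ∫ y in (0 : ℝ)..1, exp ((1 - 2 * y) * x * v) * (1 - (1 - 2 * y)) ^ (k - 1)
          * (1 + (1 - 2 * y)) ^ k := by linarith
    _ = 2 ^ (2 * k) * rankOne k (x * v) := by
      simp only [rankOne, kummerIntegral, ← intervalIntegral.integral_const_mul]
      refine intervalIntegral.integral_congr_Ioo_of_le zero_le_one fun y hy ↦ ?_
      have hy₁ : 0 ≤ 1 - y := sub_nonneg.2 hy.2.le
      have hexp : exp ((1 - 2 * y) * x * v) = exp (x * v) * exp (-(2 * (x * v) * y)) := by
        rw [← exp_add]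
        ring_nf
      have hpow : (2 : ℝ) ^ (2 * k) = 2 * 2 ^ (k - 1) * 2 ^ k := by
        rw [two_mul, rpow_add two_pos, rpow_sub_one two_ne_zero]
        ring
      simp only [sub_sub_cancel, show 1 + (1 - 2 * y) = 2 * (1 - y) by ring,
        mul_rpow zero_le_two hy.1.le, mul_rpow zero_le_two hy₁, hexp, hpow, add_sub_cancel_right]
      ring

lemma rankOne_isTheta (hk : 0 < k) :
    rankOne k =Θ[𝓟 (Ici 0)] fun t ↦ exp t * (1 + 2 * t) ^ (-k) :=
  (isTheta_refl _ _).mul <| isTheta_comp_of_mapsTo (kummerIntegral_isTheta hk (by positivity))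
    fun _ ht ↦ mem_Ici.2 (mul_nonneg zero_le_two ht)

lemma rankOne_neg_isTheta (hk : 0 < k) :
    (fun t ↦ rankOne k (-t)) =Θ[𝓟 (Ici 0)] fun t ↦ exp t * (1 + 2 * t) ^ (-(k + 1)) := by
  simp only [rankOne_neg]
  exact (isTheta_refl _ _).mul <| isTheta_comp_of_mapsTo
    (kummerIntegral_isTheta (by positivity) hk) fun _ ht ↦ mem_Ici.2 (mul_nonneg zero_le_two ht)

lemma mul_rankOne_add_mul_rankOne_neg_isTheta (hk : 0 < k) :
    (fun p : ℝ × ℝ × ℝ ↦ p.1 * rankOne k p.2.2 + p.2.1 * rankOne k (-p.2.2))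
      =Θ[𝓟 (Ici 0 ×ˢ Ici 0 ×ˢ Ici 0)]
    fun p ↦ (p.1 * (1 + 2 * p.2.2) + p.2.1) * exp p.2.2 / (1 + 2 * p.2.2) ^ (k + 1) := by
  have hmaps : MapsTo (fun p : ℝ × ℝ × ℝ ↦ p.2.2) (Ici 0 ×ˢ Ici 0 ×ˢ Ici 0) (Ici 0) :=
    fun _ hp ↦ hp.2.2
  have hpos := (isTheta_refl (fun p : ℝ × ℝ × ℝ ↦ p.1) _).mul
    (isTheta_comp_of_mapsTo (rankOne_isTheta hk) hmaps)
  have hneg := (isTheta_refl (fun p : ℝ × ℝ × ℝ ↦ p.2.1) _).mul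
    (isTheta_comp_of_mapsTo (rankOne_neg_isTheta hk) hmaps)
  refine (isTheta_principal_add hpos hneg (fun p hp ↦ mul_nonneg hp.1 (rankOne_nonneg _ _))
    (fun p hp ↦ mul_nonneg hp.2.1 (rankOne_nonneg _ _)) ?_ ?_).trans_eventuallyEq
    (eventuallyEq_principal.2 ?_)
  · rintro ⟨p, q, t⟩ ⟨hp, hq, ht⟩
    simp only [mem_Ici] at hp hq ht
    positivity
  · rintro ⟨p, q, t⟩ ⟨hp, hq, ht⟩
    simp only [mem_Ici] at hp hq ht
    positivity
  · rintro ⟨p, q, t⟩ ⟨hp, hq, ht⟩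
    simp only [mem_Ici] at hp hq ht
    have : 0 < 1 + 2 * t := by positivity
    simp only [rpow_neg this.le, rpow_add_one this.ne']
    field_simp

end RankOne

section Interlacing

open Polynomial

/-- The monic polynomial with the roots `l i`. -/
noncomputable def rootPoly {ι : Type*} [Fintype ι] (l : ι → ℝ) : ℝ[X] := ∏ i, (X - C (l i))

lemma rootPoly_comp_equiv {ι κ : Type*} [Fintype ι] [Fintype κ] (l : ι → ℝ) (w : κ ≃ ι) :
    rootPoly (l ∘ w) = rootPoly l :=
  Equiv.prod_comp w fun i ↦ X - C (l i)

lemma eval_rootPoly (l : Fin 3 → ℝ) (x : ℝ) :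
    (rootPoly l).eval x = (x - l 0) * (x - l 1) * (x - l 2) := by
  simp [rootPoly, Fin.prod_univ_three]

lemma eval_derivative_rootPoly (l : Fin 3 → ℝ) (x : ℝ) : (rootPoly l).derivative.eval x
    = (x - l 1) * (x - l 2) + (x - l 0) * (x - l 2) + (x - l 0) * (x - l 1) := by
  simp only [rootPoly, Fin.prod_univ_three, derivative_mul, derivative_sub, derivative_X,
    derivative_C, eval_add, eval_mul, eval_sub, eval_X, eval_C, eval_one, eval_zero]
  ring

/-- The measure `|P(ν₁) P(ν₂)| ^ (k - 1) dν₁ dν₂`, `P = rootPoly l`, on the pairs `(ν₁, ν₂)` that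
interlace `l`, that is `l 0 > ν₁ > l 1 > ν₂ > l 2`. The density is `W_k(l, ν)`. -/
noncomputable def interlacingMeasure (k : ℝ) (l : Fin 3 → ℝ) : Measure (ℝ × ℝ) :=
  (weightedMeasure (fun x ↦ |(rootPoly l).eval x| ^ (k - 1)) (l 1) (l 0)).prod
    (weightedMeasure (fun x ↦ |(rootPoly l).eval x| ^ (k - 1)) (l 2) (l 1))

lemma ae_interlacingMeasure (k : ℝ) (l : Fin 3 → ℝ) :
    ∀ᵐ ν ∂interlacingMeasure k l, ν ∈ Ioo (l 1) (l 0) ×ˢ Ioo (l 2) (l 1) := by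
  filter_upwards [Measure.quasiMeasurePreserving_fst.ae (ae_mem_Ioo_weightedMeasure _ _ _),
    Measure.quasiMeasurePreserving_snd.ae (ae_mem_Ioo_weightedMeasure _ _ _)] with ν h₁ h₂
  exact ⟨h₁, h₂⟩

variable {k : ℝ} {l : Fin 3 → ℝ}

lemma intervalIntegrable_abs_rootPoly_upper (hk : 0 < k) (hl : StrictAnti l) :
    IntervalIntegrable (fun x ↦ |(rootPoly l).eval x| ^ (k - 1)) volume (l 1) (l 0) := by
  have h₀₁ : l 1 < l 0 := hl (by decide)
  have h₁₂ : l 2 < l 1 := hl (by decide)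
  refine intervalIntegrable_abs_rpow_of_eq_mul (h := fun x ↦ l 2 - x) h₀₁.le (by linarith)
    (by fun_prop) (fun x hx ↦ by linarith [hx.1]) fun x ↦ ?_
  rw [eval_rootPoly]
  ring

lemma intervalIntegrable_abs_rootPoly_lower (hk : 0 < k) (hl : StrictAnti l) :
    IntervalIntegrable (fun x ↦ |(rootPoly l).eval x| ^ (k - 1)) volume (l 2) (l 1) := by
  have h₀₁ : l 1 < l 0 := hl (by decide)
  have h₁₂ : l 2 < l 1 := hl (by decide)
  refine intervalIntegrable_abs_rpow_of_eq_mul (h := fun x ↦ l 0 - x) h₁₂.le (by linarith)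
    (by fun_prop) (fun x hx ↦ by linarith [hx.2]) fun x ↦ ?_
  rw [eval_rootPoly]
  ring

lemma isFiniteMeasure_interlacingMeasure (hk : 0 < k) (hl : StrictAnti l) :
    IsFiniteMeasure (interlacingMeasure k l) := by
  have := isFiniteMeasure_weightedMeasure (intervalIntegrable_abs_rootPoly_upper hk hl)
  have := isFiniteMeasure_weightedMeasure (intervalIntegrable_abs_rootPoly_lower hk hl)
  unfold interlacingMeasure
  infer_instance

lemma ae_interlacingMeasure_mem_Icc (k : ℝ) (l : Fin 3 → ℝ) :
    ∀ᵐ ν ∂interlacingMeasure k l, ν ∈ Icc (l 1) (l 0) ×ˢ Icc (l 2) (l 1) :=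
  (ae_interlacingMeasure k l).mono fun _ hν ↦
    prod_mono Ioo_subset_Icc_self Ioo_subset_Icc_self hν

lemma integrable_interlacingMeasure (hk : 0 < k) (hl : StrictAnti l) {f : ℝ × ℝ → ℝ}
    (hf : ContinuousOn f (Icc (l 1) (l 0) ×ˢ Icc (l 2) (l 1))) :
    Integrable f (interlacingMeasure k l) :=
  have := isFiniteMeasure_interlacingMeasure hk hl
  integrable_of_continuousOn_of_ae_mem (isCompact_Icc.prod isCompact_Icc)
    (ae_interlacingMeasure_mem_Icc k l) hf

lemma abs_rootPoly_mul_abs_rootPoly_rpow (k : ℝ) {x y : ℝ} (hx : x ∈ Ioo (l 1) (l 0))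
    (hy : y ∈ Ioo (l 2) (l 1)) :
    |(rootPoly l).eval x| ^ (k - 1) * |(rootPoly l).eval y| ^ (k - 1)
      = Wk k (l 0) (l 1) (l 2) x y := by
  obtain ⟨hx₁, hx₀⟩ := hx
  obtain ⟨hy₂, hy₁⟩ := hy
  rw [Wk, ← mul_rpow (abs_nonneg _) (abs_nonneg _), ← abs_mul, ← abs_neg,
    show -((rootPoly l).eval x * (rootPoly l).eval y)
      = (l 0 - x) * (l 0 - y) * (x - l 1) * (l 1 - y) * (x - l 2) * (y - l 2) by
        rw [eval_rootPoly, eval_rootPoly]; ring]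
  congr 1
  refine abs_of_nonneg ?_
  have : 0 ≤ l 0 - x := by linarith
  have : 0 ≤ l 0 - y := by linarith
  have : 0 ≤ x - l 1 := by linarith
  have : 0 ≤ l 1 - y := by linarith
  have : 0 ≤ x - l 2 := by linarith
  have : 0 ≤ y - l 2 := by linarith
  positivity

lemma integral_interlacingMeasure (hk : 0 < k) (hl : StrictAnti l) {f : ℝ → ℝ → ℝ}
    (hf : ContinuousOn (Function.uncurry f) (Icc (l 1) (l 0) ×ˢ Icc (l 2) (l 1))) :
    ∫ ν, f ν.1 ν.2 ∂interlacingMeasure k l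
      = ∫ y in l 2..l 1, ∫ x in l 1..l 0, f x y * Wk k (l 0) (l 1) (l 2) x y := by
  have h₀₁ : l 1 < l 0 := hl (by decide)
  have h₁₂ : l 2 < l 1 := hl (by decide)
  have hint : Integrable (fun ν : ℝ × ℝ ↦ f ν.1 ν.2) (interlacingMeasure k l) :=
    integrable_interlacingMeasure hk hl hf
  rw [interlacingMeasure, integral_prod_symm _ hint, integral_weightedMeasure h₁₂.le
    (intervalIntegrable_abs_rootPoly_lower hk hl) fun x _ ↦ by positivity]
  refine intervalIntegral.integral_congr_Ioo_of_le h₁₂.le fun y hy ↦ ?_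
  simp only
  rw [integral_weightedMeasure h₀₁.le (intervalIntegrable_abs_rootPoly_upper hk hl)
    fun x _ ↦ by positivity, ← intervalIntegral.integral_mul_const]
  refine intervalIntegral.integral_congr_Ioo_of_le h₀₁.le fun x hx ↦ ?_
  simp only [← abs_rootPoly_mul_abs_rootPoly_rpow k hx hy]
  ring

lemma integral_interlacingMeasure_deriv_fst (hk : 0 < k) (hl : StrictAnti l) {u u' : ℝ × ℝ → ℝ}
    (hu : Continuous u) (hu' : Continuous u')
    (hderiv : ∀ x y, HasDerivAt (fun x ↦ u (x, y)) (u' (x, y)) x) :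
    ∫ ν, ((rootPoly l).eval ν.1 * u' ν + k * (rootPoly l).derivative.eval ν.1 * u ν)
      ∂interlacingMeasure k l = 0 := by
  have h₀₁ : l 1 < l 0 := hl (by decide)
  have h₁₂ : l 2 < l 1 := hl (by decide)
  have hint := integrable_interlacingMeasure hk hl
    (f := fun ν ↦ (rootPoly l).eval ν.1 * u' ν + k * (rootPoly l).derivative.eval ν.1 * u ν)
    (by fun_prop)
  rw [interlacingMeasure, integral_prod_symm _ hint]
  refine integral_eq_zero_of_ae (.of_forall fun y ↦ ?_)
  have h := integral_weightedMeasure_rpow_mul_deriv_add_deriv_mul hk h₀₁.le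
    (f := fun x ↦ -(rootPoly l).eval x) (g := fun x ↦ u (x, y)) (g' := fun x ↦ u' (x, y))
    (by simpa using intervalIntegrable_abs_rootPoly_upper hk hl)
    (fun x ↦ ((rootPoly l).hasDerivAt x).neg) (by fun_prop) (hderiv · y) (by fun_prop)
    (fun x hx ↦ ?_) (by simp [eval_rootPoly]) (by simp [eval_rootPoly])
  · simp only [abs_neg, neg_mul, mul_neg, ← neg_add, integral_neg, neg_eq_zero] at h
    exact h
  · have := mul_pos (mul_pos (sub_pos.2 hx.2) (sub_pos.2 hx.1)) (sub_pos.2 (h₁₂.trans hx.1))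
    rw [eval_rootPoly]
    linarith

lemma integral_interlacingMeasure_deriv_snd (hk : 0 < k) (hl : StrictAnti l) {v v' : ℝ × ℝ → ℝ}
    (hv : Continuous v) (hv' : Continuous v')
    (hderiv : ∀ x y, HasDerivAt (fun y ↦ v (x, y)) (v' (x, y)) y) :
    ∫ ν, ((rootPoly l).eval ν.2 * v' ν + k * (rootPoly l).derivative.eval ν.2 * v ν)
      ∂interlacingMeasure k l = 0 := by
  have h₀₁ : l 1 < l 0 := hl (by decide)
  have h₁₂ : l 2 < l 1 := hl (by decide)
  have hint := integrable_interlacingMeasure hk hl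
    (f := fun ν ↦ (rootPoly l).eval ν.2 * v' ν + k * (rootPoly l).derivative.eval ν.2 * v ν)
    (by fun_prop)
  rw [interlacingMeasure, integral_prod _ hint]
  refine integral_eq_zero_of_ae (.of_forall fun x ↦ ?_)
  refine integral_weightedMeasure_rpow_mul_deriv_add_deriv_mul hk h₁₂.le
    (intervalIntegrable_abs_rootPoly_lower hk hl) (rootPoly l).hasDerivAt (by fun_prop)
    (hderiv x) (by fun_prop) (fun y hy ↦ ?_) (by simp [eval_rootPoly]) (by simp [eval_rootPoly])
  have := mul_pos (mul_pos (sub_pos.2 (hy.2.trans h₀₁)) (sub_pos.2 hy.2)) (sub_pos.2 hy.1)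
  rw [eval_rootPoly]
  linarith

/-- The opposition involution `-w₀` of type `A`, that is `v ↦ (-vₙ, …, -v₁)`. -/
def opposition {n : ℕ} (v : Fin n → ℝ) : Fin n → ℝ := fun i ↦ -v i.rev

lemma strictAnti_opposition {n : ℕ} {v : Fin n → ℝ} (hv : StrictAnti v) :
    StrictAnti (opposition v) :=
  fun _ _ hij ↦ neg_lt_neg (hv (Fin.rev_lt_rev.2 hij))

lemma opposition_zero (v : Fin 3 → ℝ) : opposition v 0 = -v 2 := rfl

lemma opposition_one (v : Fin 3 → ℝ) : opposition v 1 = -v 1 := rfl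

lemma opposition_two (v : Fin 3 → ℝ) : opposition v 2 = -v 0 := rfl

lemma abs_eval_rootPoly_opposition (l : Fin 3 → ℝ) (x : ℝ) :
    |(rootPoly (opposition l)).eval x| = |(rootPoly l).eval (-x)| := by
  rw [eval_rootPoly, eval_rootPoly, ← abs_neg]
  congr 1
  simp only [opposition_zero, opposition_one, opposition_two]
  ring

lemma measurePreserving_neg_swap_interlacingMeasure (k : ℝ) (l : Fin 3 → ℝ) :
    MeasurePreserving (fun ν : ℝ × ℝ ↦ (-ν.2, -ν.1)) (interlacingMeasure k l)
      (interlacingMeasure k (opposition l)) := by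
  have hneg : ∀ w a b, MeasurePreserving (Neg.neg : ℝ → ℝ) (weightedMeasure w a b)
      (weightedMeasure (fun x ↦ w (-x)) (-b) (-a)) :=
    fun w a b ↦ ⟨measurable_neg, map_neg_weightedMeasure w a b⟩
  have h := ((hneg (fun x ↦ |(rootPoly l).eval x| ^ (k - 1)) (l 2) (l 1)).prod
    (hneg (fun x ↦ |(rootPoly l).eval x| ^ (k - 1)) (l 1) (l 0))).comp
      Measure.measurePreserving_swap
  simp only [← abs_eval_rootPoly_opposition] at h
  exact h

lemma integral_interlacingMeasure_opposition (k : ℝ) (l : Fin 3 → ℝ) (f : ℝ × ℝ → ℝ) :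
    ∫ ν, f ν ∂interlacingMeasure k (opposition l)
      = ∫ ν, f (-ν.2, -ν.1) ∂interlacingMeasure k l :=
  ((measurePreserving_neg_swap_interlacingMeasure k l).integral_comp
    ((MeasurableEquiv.prodComm.trans ((MeasurableEquiv.neg ℝ).prodCongr
      (MeasurableEquiv.neg ℝ))).measurableEmbedding) f).symm

end Interlacing

section OrbitIntegral

/-- The exponent in the splitting of `e^{⟨x, a⟩}` along the interlacing variables: it equals
`⟨x, (m, m, ν₃)⟩` with `m = (ν₁ + ν₂) / 2` and `ν₁ + ν₂ + ν₃ = a₁ + a₂ + a₃`. -/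
noncomputable def meanExponent (a x : Fin 3 → ℝ) (ν : ℝ × ℝ) : ℝ :=
  x 2 * (∑ i, a i - ν.1 - ν.2) + (x 0 + x 1) / 2 * (ν.1 + ν.2)

/-- The argument of the rank-one kernel in the formula for the `A₂` kernel. -/
noncomputable def rankOneArg (x : Fin 3 → ℝ) (ν : ℝ × ℝ) : ℝ := (x 0 - x 1) / 2 * (ν.1 - ν.2)

/-- The integrand of the rank-one formula for the `A₂` Dunkl kernel, without the factor `W_k`.
For `a` equal to the spectral parameter it is the integrand of `EkA2`; the other orderings `a` of
the spectral parameter complete it to a solution of the Dunkl system. -/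
noncomputable def orbitIntegrand (k : ℝ) (a x : Fin 3 → ℝ) (ν : ℝ × ℝ) : ℝ :=
  (ν.1 - a 2) * (ν.2 - a 2) * exp (meanExponent a x ν)
    * ((ν.1 - a 1) * (a 0 - ν.2) * rankOne k (rankOneArg x ν)
      + (a 0 - ν.1) * (a 1 - ν.2) * rankOne k (-rankOneArg x ν))

/-- The derivative of `x ↦ orbitIntegrand k a x ν` in the direction `v`. -/
noncomputable def orbitIntegrandDeriv (k : ℝ) (a x v : Fin 3 → ℝ) (ν : ℝ × ℝ) : ℝ :=
  meanExponent a v ν * orbitIntegrand k a x ν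
    + (ν.1 - a 2) * (ν.2 - a 2) * exp (meanExponent a x ν) * rankOneArg v ν
      * ((ν.1 - a 1) * (a 0 - ν.2)
          * (rankOne k (rankOneArg x ν) - rankOneDefect k (rankOneArg x ν))
        - (a 0 - ν.1) * (a 1 - ν.2)
          * (rankOne k (-rankOneArg x ν) - rankOneDefect k (rankOneArg x ν)))

/-- The integral of `orbitIntegrand k a x` over the pairs that interlace `l`. It is used for the
reorderings `a` of `l`. -/
noncomputable def orbitIntegral (k : ℝ) (l a x : Fin 3 → ℝ) : ℝ :=
  ∫ ν, orbitIntegrand k a x ν ∂interlacingMeasure k l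

/-- The derivative of `x ↦ orbitIntegral k l a x` in the direction `v`. -/
noncomputable def orbitIntegralDeriv (k : ℝ) (l a x v : Fin 3 → ℝ) : ℝ :=
  ∫ ν, orbitIntegrandDeriv k a x v ν ∂interlacingMeasure k l

lemma meanExponent_smul (r : ℝ) (a x : Fin 3 → ℝ) (ν : ℝ × ℝ) :
    meanExponent a (r • x) ν = r * meanExponent a x ν := by
  simp only [meanExponent, Pi.smul_apply, smul_eq_mul]
  ring

lemma rankOneArg_smul (r : ℝ) (x : Fin 3 → ℝ) (ν : ℝ × ℝ) :
    rankOneArg (r • x) ν = r * rankOneArg x ν := by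
  simp only [rankOneArg, Pi.smul_apply, smul_eq_mul]
  ring

lemma orbitIntegralDeriv_smul (k r : ℝ) (l a x v : Fin 3 → ℝ) :
    orbitIntegralDeriv k l a x (r • v) = r * orbitIntegralDeriv k l a x v := by
  rw [orbitIntegralDeriv, orbitIntegralDeriv, ← integral_const_mul]
  congr 1 with ν
  rw [orbitIntegrandDeriv, meanExponent_smul, rankOneArg_smul, orbitIntegrandDeriv]
  ring

variable {k : ℝ} {l a : Fin 3 → ℝ}

lemma continuous_orbitIntegrand (hk : 0 < k) (a x : Fin 3 → ℝ) :
    Continuous (orbitIntegrand k a x) := by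
  have := continuous_rankOne hk
  unfold orbitIntegrand meanExponent rankOneArg
  fun_prop

lemma continuous_orbitIntegrandDeriv (hk : 0 < k) (a v : Fin 3 → ℝ) :
    Continuous fun p : (Fin 3 → ℝ) × ℝ × ℝ ↦ orbitIntegrandDeriv k a p.1 v p.2 := by
  have := continuous_rankOne hk
  have := continuous_rankOneDefect hk
  unfold orbitIntegrandDeriv orbitIntegrand meanExponent rankOneArg
  fun_prop

lemma hasDerivAt_orbitIntegrand (hk : 0 < k) (a x : Fin 3 → ℝ) (r : ℝ) (ν : ℝ × ℝ) :
    HasDerivAt (fun r : ℝ ↦ orbitIntegrand k a (r • x) ν)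
      (orbitIntegrandDeriv k a (r • x) x ν) r := by
  have harg := (hasDerivAt_id r).mul_const (rankOneArg x ν)
  have hexp := ((hasDerivAt_id r).mul_const (meanExponent a x ν)).exp
  have hpos := (hasDerivAt_rankOne hk _).comp r harg
  have hneg := (hasDerivAt_rankOne hk _).comp r harg.neg
  have h := (hexp.const_mul ((ν.1 - a 2) * (ν.2 - a 2))).mul
    ((hpos.const_mul ((ν.1 - a 1) * (a 0 - ν.2))).add
      (hneg.const_mul ((a 0 - ν.1) * (a 1 - ν.2))))
  simp only [orbitIntegrandDeriv, orbitIntegrand, meanExponent_smul, rankOneArg_smul]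
  refine h.congr_deriv ?_
  simp only [Function.comp_apply, Pi.neg_apply, id_eq, rankOneDefect_neg, Pi.add_apply]
  ring

lemma hasDerivAt_orbitIntegral (hk : 0 < k) (hl : StrictAnti l) (a x : Fin 3 → ℝ) (r : ℝ) :
    HasDerivAt (fun r : ℝ ↦ orbitIntegral k l a (r • x))
      (orbitIntegralDeriv k l a (r • x) x) r :=
  have := isFiniteMeasure_interlacingMeasure hk hl
  hasDerivAt_integral_of_isCompact (f := fun r ↦ orbitIntegrand k a (r • x))
    (f' := fun r ↦ orbitIntegrandDeriv k a (r • x) x) (isCompact_Icc.prod isCompact_Icc)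
    (ae_interlacingMeasure_mem_Icc k l) (fun r ↦ continuous_orbitIntegrand hk a (r • x))
    ((continuous_orbitIntegrandDeriv hk a x).comp
      (by fun_prop : Continuous fun p : ℝ × ℝ × ℝ ↦ (p.1 • x, p.2)))
    (fun r ν ↦ hasDerivAt_orbitIntegrand hk a x r ν) r

/-- The first component of the vector field whose weighted divergence is the Euler identity
`orbitIntegralDeriv_self`. -/
noncomputable def eulerFieldFst (k : ℝ) (a x : Fin 3 → ℝ) (ν : ℝ × ℝ) : ℝ :=
  (ν.2 - a 2) * exp (meanExponent a x ν)
    * ((a 0 - ν.2) * rankOne k (rankOneArg x ν) - (a 1 - ν.2) * rankOne k (-rankOneArg x ν))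

/-- The second component of the vector field whose weighted divergence is the Euler identity
`orbitIntegralDeriv_self`. -/
noncomputable def eulerFieldSnd (k : ℝ) (a x : Fin 3 → ℝ) (ν : ℝ × ℝ) : ℝ :=
  -(ν.1 - a 2) * exp (meanExponent a x ν)
    * ((ν.1 - a 1) * rankOne k (rankOneArg x ν) + (a 0 - ν.1) * rankOne k (-rankOneArg x ν))

/-- The derivative of `eulerFieldFst` in `ν₁`. -/
noncomputable def eulerFieldFstDeriv (k : ℝ) (a x : Fin 3 → ℝ) (ν : ℝ × ℝ) : ℝ :=
  ((x 0 + x 1) / 2 - x 2) * eulerFieldFst k a x ν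
    + (x 0 - x 1) / 2 * ((ν.2 - a 2) * exp (meanExponent a x ν)
      * ((a 0 - ν.2) * (rankOne k (rankOneArg x ν) - rankOneDefect k (rankOneArg x ν))
        + (a 1 - ν.2) * (rankOne k (-rankOneArg x ν) - rankOneDefect k (rankOneArg x ν))))

/-- The derivative of `eulerFieldSnd` in `ν₂`. -/
noncomputable def eulerFieldSndDeriv (k : ℝ) (a x : Fin 3 → ℝ) (ν : ℝ × ℝ) : ℝ :=
  ((x 0 + x 1) / 2 - x 2) * eulerFieldSnd k a x ν
    + (x 0 - x 1) / 2 * ((ν.1 - a 2) * exp (meanExponent a x ν)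
      * ((ν.1 - a 1) * (rankOne k (rankOneArg x ν) - rankOneDefect k (rankOneArg x ν))
        - (a 0 - ν.1) * (rankOne k (-rankOneArg x ν) - rankOneDefect k (rankOneArg x ν))))

lemma hasDerivAt_eulerFieldFst (hk : 0 < k) (a x : Fin 3 → ℝ) (ν₁ ν₂ : ℝ) :
    HasDerivAt (fun ν₁ ↦ eulerFieldFst k a x (ν₁, ν₂)) (eulerFieldFstDeriv k a x (ν₁, ν₂)) ν₁ := by
  have hmean : HasDerivAt (fun ν₁ ↦ meanExponent a x (ν₁, ν₂)) (x 2 * -1 + (x 0 + x 1) / 2 * 1)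
      ν₁ :=
    ((((hasDerivAt_id ν₁).const_sub (∑ i, a i)).sub_const ν₂).const_mul (x 2)).add
      (((hasDerivAt_id ν₁).add_const ν₂).const_mul ((x 0 + x 1) / 2))
  have harg : HasDerivAt (fun ν₁ ↦ rankOneArg x (ν₁, ν₂)) ((x 0 - x 1) / 2 * 1) ν₁ :=
    ((hasDerivAt_id ν₁).sub_const ν₂).const_mul ((x 0 - x 1) / 2)
  have h := (hmean.exp.const_mul (ν₂ - a 2)).mul
    ((((hasDerivAt_rankOne hk _).comp ν₁ harg).const_mul (a 0 - ν₂)).sub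
      (((hasDerivAt_rankOne hk _).comp ν₁ harg.neg).const_mul (a 1 - ν₂)))
  refine h.congr_deriv ?_
  simp only [eulerFieldFstDeriv, eulerFieldFst, Function.comp_apply, Pi.sub_apply, Pi.neg_apply,
    rankOneDefect_neg]
  ring

lemma hasDerivAt_eulerFieldSnd (hk : 0 < k) (a x : Fin 3 → ℝ) (ν₁ ν₂ : ℝ) :
    HasDerivAt (fun ν₂ ↦ eulerFieldSnd k a x (ν₁, ν₂)) (eulerFieldSndDeriv k a x (ν₁, ν₂)) ν₂ := by
  have hmean : HasDerivAt (fun ν₂ ↦ meanExponent a x (ν₁, ν₂)) (x 2 * -1 + (x 0 + x 1) / 2 * 1)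
      ν₂ :=
    (((hasDerivAt_id ν₂).const_sub (∑ i, a i - ν₁)).const_mul (x 2)).add
      (((hasDerivAt_id ν₂).const_add ν₁).const_mul ((x 0 + x 1) / 2))
  have harg : HasDerivAt (fun ν₂ ↦ rankOneArg x (ν₁, ν₂)) ((x 0 - x 1) / 2 * -1) ν₂ :=
    ((hasDerivAt_id ν₂).const_sub ν₁).const_mul ((x 0 - x 1) / 2)
  have h := (hmean.exp.const_mul (-(ν₁ - a 2))).mul
    ((((hasDerivAt_rankOne hk _).comp ν₂ harg).const_mul (ν₁ - a 1)).add
      (((hasDerivAt_rankOne hk _).comp ν₂ harg.neg).const_mul (a 0 - ν₁)))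
  refine h.congr_deriv ?_
  simp only [eulerFieldSndDeriv, eulerFieldSnd, Function.comp_apply, Pi.add_apply, Pi.neg_apply,
    rankOneDefect_neg]
  ring

/-- The three reflections of the Weyl group of type `A₂`. -/
def reflection : Fin 3 → Equiv.Perm (Fin 3) :=
  ![Equiv.swap 0 1, Equiv.swap 0 2, Equiv.swap 1 2]

lemma comp_reflection_zero {α : Type*} (a : Fin 3 → α) :
    a ∘ reflection 0 = ![a 1, a 0, a 2] := by
  ext i
  fin_cases i <;> rfl

lemma comp_reflection_one {α : Type*} (a : Fin 3 → α) :
    a ∘ reflection 1 = ![a 2, a 1, a 0] := by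
  ext i
  fin_cases i <;> rfl

lemma comp_reflection_two {α : Type*} (a : Fin 3 → α) :
    a ∘ reflection 2 = ![a 0, a 2, a 1] := by
  ext i
  fin_cases i <;> rfl

lemma meanExponent_comp_perm (a x : Fin 3 → ℝ) (w : Equiv.Perm (Fin 3)) (ν : ℝ × ℝ) :
    meanExponent (a ∘ w) x ν = meanExponent a x ν := by
  simp only [meanExponent, Function.comp_apply, Equiv.sum_comp w a]

lemma continuous_eulerFieldFst (hk : 0 < k) (a x : Fin 3 → ℝ) :
    Continuous (eulerFieldFst k a x) := by
  have := continuous_rankOne hk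
  unfold eulerFieldFst meanExponent rankOneArg
  fun_prop

lemma continuous_eulerFieldSnd (hk : 0 < k) (a x : Fin 3 → ℝ) :
    Continuous (eulerFieldSnd k a x) := by
  have := continuous_rankOne hk
  unfold eulerFieldSnd meanExponent rankOneArg
  fun_prop

lemma continuous_eulerFieldFstDeriv (hk : 0 < k) (a x : Fin 3 → ℝ) :
    Continuous (eulerFieldFstDeriv k a x) := by
  have := continuous_rankOne hk
  have := continuous_rankOneDefect hk
  unfold eulerFieldFstDeriv eulerFieldFst meanExponent rankOneArg
  fun_prop

lemma continuous_eulerFieldSndDeriv (hk : 0 < k) (a x : Fin 3 → ℝ) :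
    Continuous (eulerFieldSndDeriv k a x) := by
  have := continuous_rankOne hk
  have := continuous_rankOneDefect hk
  unfold eulerFieldSndDeriv eulerFieldSnd meanExponent rankOneArg
  fun_prop

lemma orbitIntegrandDeriv_self (hk : 0 < k) (a x : Fin 3 → ℝ) (ν : ℝ × ℝ) :
    orbitIntegrandDeriv k a x x ν = (∑ i, x i * a i) * orbitIntegrand k a x ν
      - k * ∑ j, (orbitIntegrand k a x ν + orbitIntegrand k (a ∘ reflection j) x ν)
      + ((rootPoly a).eval ν.1 * eulerFieldFstDeriv k a x ν
        + k * (rootPoly a).derivative.eval ν.1 * eulerFieldFst k a x ν)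
      + ((rootPoly a).eval ν.2 * eulerFieldSndDeriv k a x ν
        + k * (rootPoly a).derivative.eval ν.2 * eulerFieldSnd k a x ν) := by
  simp only [Fin.sum_univ_three, orbitIntegrandDeriv, orbitIntegrand, eulerFieldFstDeriv,
    eulerFieldSndDeriv, eulerFieldFst, eulerFieldSnd, meanExponent_comp_perm, eval_rootPoly,
    eval_derivative_rootPoly, comp_reflection_zero, comp_reflection_one, comp_reflection_two,
    Matrix.cons_val]
  have hdefect := mul_rankOneDefect hk (rankOneArg x ν)
  have hmean : meanExponent a x ν
    = x 2 * (a 0 + a 1 + a 2 - ν.1 - ν.2) + (x 0 + x 1) / 2 * (ν.1 + ν.2) := by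
    rw [meanExponent, Fin.sum_univ_three]
  generalize exp (meanExponent a x ν) = E
  rw [hmean]
  generalize rankOne k (rankOneArg x ν) = u at *
  generalize rankOne k (-rankOneArg x ν) = v at *
  generalize rankOneDefect k (rankOneArg x ν) = δ at *
  rw [rankOneArg] at *
  linear_combination (-(a 0 - a 1) ^ 2 * (ν.1 - a 2) * (ν.2 - a 2) * E) * hdefect

lemma orbitIntegralDeriv_self (hk : 0 < k) (hl : StrictAnti l) (ha : rootPoly a = rootPoly l)
    (x : Fin 3 → ℝ) :
    orbitIntegralDeriv k l a x x = (∑ i, x i * a i) * orbitIntegral k l a x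
      - k * ∑ j, (orbitIntegral k l a x + orbitIntegral k l (a ∘ reflection j) x) := by
  have hint : ∀ {f : ℝ × ℝ → ℝ}, Continuous f → Integrable f (interlacingMeasure k l) :=
    fun hf ↦ integrable_interlacingMeasure hk hl hf.continuousOn
  have hG (b) := continuous_orbitIntegrand hk b x
  have hu := continuous_eulerFieldFst hk a x
  have hu' := continuous_eulerFieldFstDeriv hk a x
  have hv := continuous_eulerFieldSnd hk a x
  have hv' := continuous_eulerFieldSndDeriv hk a x
  simp only [orbitIntegralDeriv, orbitIntegrandDeriv_self hk, ha]
  rw [integral_add (hint (by fun_prop)) (hint (by fun_prop)),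
    integral_add (hint (by fun_prop)) (hint (by fun_prop)),
    integral_interlacingMeasure_deriv_fst hk hl hu hu' (hasDerivAt_eulerFieldFst hk a x · ·),
    integral_interlacingMeasure_deriv_snd hk hl hv hv' (hasDerivAt_eulerFieldSnd hk a x · ·),
    integral_sub (hint (by fun_prop)) (hint (by fun_prop)), integral_const_mul,
    integral_const_mul, integral_finsetSum _ fun j _ ↦ hint (by fun_prop)]
  simp only [integral_add (hint (hG _)) (hint (hG _)), orbitIntegral, add_zero]

end OrbitIntegral

section Duality

lemma opposition_smul {n : ℕ} (r : ℝ) (x : Fin n → ℝ) : opposition (r • x) = r • opposition x := by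
  ext i
  simp [opposition]

lemma opposition_comp_perm {n : ℕ} (a : Fin n → ℝ) (w : Equiv.Perm (Fin n)) :
    opposition (a ∘ w) = opposition a ∘ (Fin.revPerm.trans (w.trans Fin.revPerm)) := by
  ext i
  simp [opposition]

lemma opposition_comp_reflection (a : Fin 3 → ℝ) (j : Fin 3) :
    opposition a ∘ reflection j = opposition (a ∘ reflection j.rev) := by
  ext i
  fin_cases j <;> fin_cases i <;> rfl

lemma sum_opposition_mul_opposition {n : ℕ} (x a : Fin n → ℝ) :
    ∑ i, opposition x i * opposition a i = ∑ i, x i * a i := by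
  simp only [opposition, neg_mul_neg]
  exact Equiv.sum_comp Fin.revPerm fun i ↦ x i * a i

variable {k : ℝ} {l : Fin 3 → ℝ}

lemma mul_orbitIntegralDeriv_smul (hk : 0 < k) (hl : StrictAnti l) (w : Equiv.Perm (Fin 3))
    (x : Fin 3 → ℝ) (r : ℝ) :
    r * orbitIntegralDeriv k l (l ∘ w) (r • x) x
      = r * (∑ i, x i * l (w i)) * orbitIntegral k l (l ∘ w) (r • x)
        - k * ∑ j, (orbitIntegral k l (l ∘ w) (r • x)
          + orbitIntegral k l (l ∘ ⇑(w * reflection j)) (r • x)) := by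
  rw [← orbitIntegralDeriv_smul, orbitIntegralDeriv_self hk hl (rootPoly_comp_equiv l w)]
  simp only [Pi.smul_apply, smul_eq_mul, Function.comp_apply, Finset.mul_sum, mul_assoc]
  rfl

lemma mul_orbitIntegralDeriv_opposition_smul (hk : 0 < k) (hl : StrictAnti l)
    (w : Equiv.Perm (Fin 3)) (x : Fin 3 → ℝ) (r : ℝ) :
    r * orbitIntegralDeriv k (opposition l) (opposition (l ∘ w)) (r • opposition x) (opposition x)
      = r * (∑ i, x i * l (w i))
          * orbitIntegral k (opposition l) (opposition (l ∘ w)) (r • opposition x)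
        - k * ∑ j, (orbitIntegral k (opposition l) (opposition (l ∘ w)) (r • opposition x)
          + orbitIntegral k (opposition l) (opposition (l ∘ ⇑(w * reflection j)))
              (r • opposition x)) := by
  have hroot : rootPoly (opposition (l ∘ w)) = rootPoly (opposition l) := by
    rw [opposition_comp_perm, rootPoly_comp_equiv]
  rw [← orbitIntegralDeriv_smul, orbitIntegralDeriv_self hk (strictAnti_opposition hl) hroot,
    ← opposition_smul, sum_opposition_mul_opposition]
  simp only [opposition_comp_reflection]
  rw [← Equiv.sum_comp Fin.revPerm fun j ↦
    orbitIntegral k (opposition l) (opposition (l ∘ w)) (opposition (r • x))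
      + orbitIntegral k (opposition l) (opposition (l ∘ ⇑(w * reflection j))) (opposition (r • x))]
  simp only [Pi.smul_apply, smul_eq_mul, Function.comp_apply, Finset.mul_sum, mul_assoc]
  rfl

lemma orbitIntegral_comp_mul_reflection_zero (hk : 0 < k) (hl : StrictAnti l)
    (w : Equiv.Perm (Fin 3)) (j : Fin 3) :
    orbitIntegral k l (l ∘ ⇑(w * reflection j)) 0 = -orbitIntegral k l (l ∘ w) 0 := by
  refine comp_perm_eq_neg_of_sum_eq_zero (e := fun j ↦ Equiv.mulRight (reflection j))
    (u := fun w : Equiv.Perm (Fin 3) ↦ orbitIntegral k l (l ∘ w) 0) (fun w ↦ ?_) j w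
  simpa [hk.ne'] using mul_orbitIntegralDeriv_smul hk hl w 0 0

lemma orbitIntegral_opposition_zero (k : ℝ) (l a : Fin 3 → ℝ) :
    orbitIntegral k (opposition l) (opposition a) 0
      = -orbitIntegral k l (a ∘ reflection 1) 0 := by
  rw [orbitIntegral, integral_interlacingMeasure_opposition, orbitIntegral, ← integral_neg]
  congr 1 with ν
  simp only [orbitIntegrand, comp_reflection_one, opposition_zero, opposition_one, opposition_two,
    meanExponent, rankOneArg, Pi.zero_apply, Matrix.cons_val]
  ring_nf

theorem orbitIntegral_opposition (hk : 0 < k) (hl : StrictAnti l) (w : Equiv.Perm (Fin 3))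
    (x : Fin 3 → ℝ) :
    orbitIntegral k (opposition l) (opposition (l ∘ w)) (opposition x)
      = orbitIntegral k l (l ∘ w) x := by
  have hzero := eq_zero_of_reflection_system hk.le
    (fun j ↦ Equiv.mulRight (reflection j)) (fun w ↦ ∑ i, x i * l (w i))
    (u := fun w r ↦ orbitIntegral k (opposition l) (opposition (l ∘ w)) (r • opposition x)
      - orbitIntegral k l (l ∘ w) (r • x))
    (fun w r ↦ (hasDerivAt_orbitIntegral hk (strictAnti_opposition hl) _ _ r).sub
      (hasDerivAt_orbitIntegral hk hl _ x r))
    (fun w r _ ↦ ?_) (fun w ↦ ?_) zero_le_one w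
  · simpa [sub_eq_zero] using hzero
  · have hP := mul_orbitIntegralDeriv_smul hk hl w x r
    have hQ := mul_orbitIntegralDeriv_opposition_smul hk hl w x r
    simp only [Finset.sum_add_distrib, Finset.sum_sub_distrib, Equiv.coe_mulRight] at hP hQ ⊢
    linear_combination hQ - hP
  · simp only [zero_smul, orbitIntegral_opposition_zero]
    have := orbitIntegral_comp_mul_reflection_zero hk hl w 1
    rw [Equiv.Perm.coe_mul, ← Function.comp_assoc] at this
    linarith

end Duality

section Estimate

lemma orbitIntegrand_opposition (k : ℝ) (l x : Fin 3 → ℝ) (ν : ℝ × ℝ) :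
    orbitIntegrand k (opposition l) (opposition x) (-ν.2, -ν.1)
      = (l 0 - ν.1) * (l 0 - ν.2)
        * exp (x 0 * (∑ i, l i - ν.1 - ν.2) + (x 1 + x 2) / 2 * (ν.1 + ν.2))
        * ((ν.1 - l 2) * (l 1 - ν.2) * rankOne k ((x 1 - x 2) / 2 * (ν.1 - ν.2))
          + (ν.1 - l 1) * (ν.2 - l 2) * rankOne k (-((x 1 - x 2) / 2 * (ν.1 - ν.2)))) := by
  simp only [orbitIntegrand, meanExponent, rankOneArg, opposition_zero, opposition_one,
    opposition_two, Fin.sum_univ_three]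
  ring_nf

/-- The integrand on the right-hand side of the estimate, without the factor `W_k`. -/
noncomputable def betaPlusIntegrand (k : ℝ) (l x : Fin 3 → ℝ) (ν : ℝ × ℝ) : ℝ :=
  (ν.1 - ν.2) * ((l 1 - l 2) + (x 1 - x 2) * (ν.1 - l 2) * (l 1 - ν.2))
    / (1 + (x 1 - x 2) * (ν.1 - ν.2)) ^ (k + 1)
    * ((l 0 - ν.1) * (l 0 - ν.2)) * exp ((x 1 - x 0) * ν.1 + (x 2 - x 0) * ν.2)

/-- The integral on the right-hand side of the estimate. -/
noncomputable def betaPlusIntegral (k : ℝ) (l x : Fin 3 → ℝ) : ℝ :=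
  ∫ n2 in l 2..l 1, ∫ n1 in l 1..l 0,
    betaPlusIntegrand k l x (n1, n2) * Wk k (l 0) (l 1) (l 2) n1 n2

/-- The range `X ∈ ℝ³`, `λ₁ > λ₂ > λ₃`, `x₂ ≥ x₃` of the estimate, as a set of pairs `(λ, X)`. -/
def betaPlusDomain : Set ((Fin 3 → ℝ) × (Fin 3 → ℝ)) := {p | StrictAnti p.1 ∧ p.2 2 ≤ p.2 1}

variable {k : ℝ} {l x : Fin 3 → ℝ}

lemma betaPlusIntegrand_nonneg (hx : x 2 ≤ x 1) {ν : ℝ × ℝ}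
    (hν : ν ∈ Icc (l 1) (l 0) ×ˢ Icc (l 2) (l 1)) : 0 ≤ betaPlusIntegrand k l x ν := by
  obtain ⟨⟨h₁, h₀⟩, h₂, h₁'⟩ := hν
  have : 0 ≤ ν.1 - ν.2 := by linarith
  have : 0 ≤ l 1 - l 2 := by linarith
  have : 0 ≤ x 1 - x 2 := by linarith
  have : 0 ≤ ν.1 - l 2 := by linarith
  have : 0 ≤ l 1 - ν.2 := by linarith
  have : 0 ≤ l 0 - ν.1 := by linarith
  have : 0 ≤ l 0 - ν.2 := by linarith
  unfold betaPlusIntegrand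
  positivity

lemma continuousOn_betaPlusIntegrand (hx : x 2 ≤ x 1) :
    ContinuousOn (betaPlusIntegrand k l x) (Icc (l 1) (l 0) ×ˢ Icc (l 2) (l 1)) := by
  have hpos : ∀ ν ∈ Icc (l 1) (l 0) ×ˢ Icc (l 2) (l 1), 0 < 1 + (x 1 - x 2) * (ν.1 - ν.2) := by
    rintro ν ⟨⟨h₁, -⟩, -, h₁'⟩
    have := mul_nonneg (sub_nonneg.2 hx) (sub_nonneg.2 (h₁'.trans h₁))
    linarith
  unfold betaPlusIntegrand
  refine ((ContinuousOn.div (by fun_prop) (ContinuousOn.rpow_const (by fun_prop) fun ν hν ↦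
    .inl (hpos ν hν).ne') fun ν hν ↦ (rpow_pos_of_pos (hpos ν hν) _).ne').mul ?_).mul ?_ <;>
  fun_prop

lemma integral_betaPlusIntegrand (hk : 0 < k) (hl : StrictAnti l) (hx : x 2 ≤ x 1) :
    ∫ ν, betaPlusIntegrand k l x ν ∂interlacingMeasure k l = betaPlusIntegral k l x :=
  integral_interlacingMeasure hk hl (f := fun n1 n2 ↦ betaPlusIntegrand k l x (n1, n2))
    (continuousOn_betaPlusIntegrand hx)

lemma betaPlusIntegral_nonneg (hk : 0 < k) (hl : StrictAnti l) (hx : x 2 ≤ x 1) :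
    0 ≤ betaPlusIntegral k l x := by
  rw [← integral_betaPlusIntegrand hk hl hx]
  exact integral_nonneg_of_ae
    ((ae_interlacingMeasure_mem_Icc k l).mono fun _ ↦ betaPlusIntegrand_nonneg hx)

lemma orbitIntegrand_self_nonneg {ν : ℝ × ℝ} (hν : ν ∈ Icc (l 1) (l 0) ×ˢ Icc (l 2) (l 1)) :
    0 ≤ orbitIntegrand k l x ν := by
  obtain ⟨⟨h₁, h₀⟩, h₂, h₁'⟩ := hν
  have : 0 ≤ ν.1 - l 2 := by linarith
  have : 0 ≤ ν.2 - l 2 := by linarith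
  have : 0 ≤ ν.1 - l 1 := by linarith
  have : 0 ≤ l 0 - ν.2 := by linarith
  have : 0 ≤ l 0 - ν.1 := by linarith
  have : 0 ≤ l 1 - ν.2 := by linarith
  have := rankOne_nonneg k
  unfold orbitIntegrand
  have := this (rankOneArg x ν)
  have := rankOne_nonneg k (-rankOneArg x ν)
  positivity

lemma orbitIntegrand_opposition_isTheta (hk : 0 < k) :
    (fun p : ((Fin 3 → ℝ) × (Fin 3 → ℝ)) × ℝ × ℝ ↦
        orbitIntegrand k (opposition p.1.1) (opposition p.1.2) (-p.2.2, -p.2.1))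
      =Θ[𝓟 {p | p.1 ∈ betaPlusDomain ∧
        p.2 ∈ Icc (p.1.1 1) (p.1.1 0) ×ˢ Icc (p.1.1 2) (p.1.1 1)}]
    fun p ↦ exp (p.1.2 0 * ∑ i, p.1.1 i) * betaPlusIntegrand k p.1.1 p.1.2 p.2 := by
  simp only [orbitIntegrand_opposition]
  refine ((isTheta_refl _ _).mul (isTheta_comp_of_mapsTo
    (mul_rankOne_add_mul_rankOne_neg_isTheta hk)
    (φ := fun p : ((Fin 3 → ℝ) × (Fin 3 → ℝ)) × ℝ × ℝ ↦
      ((p.2.1 - p.1.1 2) * (p.1.1 1 - p.2.2), (p.2.1 - p.1.1 1) * (p.2.2 - p.1.1 2),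
        (p.1.2 1 - p.1.2 2) / 2 * (p.2.1 - p.2.2))) ?_)).trans_eventuallyEq
    (eventuallyEq_principal.2 ?_)
  · rintro ⟨⟨l, x⟩, ν⟩ ⟨⟨-, hx⟩, ⟨h₁, -⟩, h₂, h₁'⟩
    exact ⟨mul_nonneg (sub_nonneg.2 (h₂.trans (h₁'.trans h₁))) (sub_nonneg.2 h₁'),
      mul_nonneg (sub_nonneg.2 h₁) (sub_nonneg.2 h₂),
      mul_nonneg (div_nonneg (sub_nonneg.2 hx) zero_le_two) (sub_nonneg.2 (h₁'.trans h₁))⟩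
  · rintro ⟨⟨l, x⟩, ν⟩ -
    have hexp : exp (x 0 * (∑ i, l i - ν.1 - ν.2) + (x 1 + x 2) / 2 * (ν.1 + ν.2))
        * exp ((x 1 - x 2) / 2 * (ν.1 - ν.2))
        = exp (x 0 * ∑ i, l i) * exp ((x 1 - x 0) * ν.1 + (x 2 - x 0) * ν.2) := by
      rw [← exp_add, ← exp_add]
      ring_nf
    have harg : 2 * ((x 1 - x 2) / 2 * (ν.1 - ν.2)) = (x 1 - x 2) * (ν.1 - ν.2) := by ring
    simp only [betaPlusIntegrand, harg]
    linear_combination ((l 0 - ν.1) * (l 0 - ν.2)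
      * ((ν.1 - l 2) * (l 1 - ν.2) * (1 + (x 1 - x 2) * (ν.1 - ν.2))
        + (ν.1 - l 1) * (ν.2 - l 2)) / (1 + (x 1 - x 2) * (ν.1 - ν.2)) ^ (k + 1)) * hexp

lemma orbitIntegral_self_isTheta (hk : 0 < k) :
    (fun p : (Fin 3 → ℝ) × (Fin 3 → ℝ) ↦ orbitIntegral k p.1 p.1 p.2)
      =Θ[𝓟 betaPlusDomain]
    fun p ↦ exp (p.2 0 * ∑ i, p.1 i) * betaPlusIntegral k p.1 p.2 := by
  have htheta := isTheta_principal_integral (s := betaPlusDomain)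
    (t := fun p ↦ Icc (p.1 1) (p.1 0) ×ˢ Icc (p.1 2) (p.1 1))
    (μ := fun p ↦ interlacingMeasure k p.1)
    (f := fun p ν ↦ orbitIntegrand k (opposition p.1) (opposition p.2) (-ν.2, -ν.1))
    (g := fun p ν ↦ exp (p.2 0 * ∑ i, p.1 i) * betaPlusIntegrand k p.1 p.2 ν)
    (fun p _ ↦ ae_interlacingMeasure_mem_Icc k p.1) (orbitIntegrand_opposition_isTheta hk)
    (fun p hp ↦ by
      have := continuous_orbitIntegrand hk (opposition p.1) (opposition p.2)
      exact integrable_interlacingMeasure hk hp.1 (by fun_prop))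
    (fun p _ ν hν ↦ orbitIntegrand_self_nonneg
      ⟨⟨neg_le_neg hν.2.2, neg_le_neg hν.2.1⟩, neg_le_neg hν.1.2, neg_le_neg hν.1.1⟩)
    (fun p hp ↦ (integrable_interlacingMeasure hk hp.1
      (continuousOn_betaPlusIntegrand hp.2)).const_mul _)
    (fun p hp ν hν ↦ mul_nonneg (exp_pos _).le (betaPlusIntegrand_nonneg hp.2 hν))
  have hleft : ∀ p ∈ betaPlusDomain, orbitIntegral k p.1 p.1 p.2 = ∫ ν, orbitIntegrand k
      (opposition p.1) (opposition p.2) (-ν.2, -ν.1) ∂interlacingMeasure k p.1 := fun p hp ↦ by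
    rw [← integral_interlacingMeasure_opposition]
    exact (orbitIntegral_opposition hk hp.1 1 p.2).symm
  have hright : ∀ p ∈ betaPlusDomain, ∫ ν, exp (p.2 0 * ∑ i, p.1 i)
      * betaPlusIntegrand k p.1 p.2 ν ∂interlacingMeasure k p.1
        = exp (p.2 0 * ∑ i, p.1 i) * betaPlusIntegral k p.1 p.2 := fun p hp ↦ by
    rw [integral_const_mul, integral_betaPlusIntegrand hk hp.1 hp.2]
  exact (EventuallyEq.trans_isTheta (eventuallyEq_principal.2 hleft) htheta).trans_eventuallyEq
    (eventuallyEq_principal.2 hright)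

/-- The constant relating `V(λ)^{2k} E_k(X,λ)` to the integral of `orbitIntegrand`. -/
noncomputable def kernelConst (k : ℝ) : ℝ :=
  3 * Gamma (3 * k) / Gamma k ^ 2 * (Gamma (k + 1 / 2) / (√π * Gamma k) * 2 ^ (2 * k))

lemma kernelConst_pos (hk : 0 < k) : 0 < kernelConst k := by
  have := Gamma_pos_of_pos hk
  have := Gamma_pos_of_pos (by positivity : 0 < 3 * k)
  have := Gamma_pos_of_pos (by positivity : 0 < k + 1 / 2)
  unfold kernelConst
  positivity

lemma Vlam_rpow_mul_EkA2 (hk : 0 < k) (hl : StrictAnti l) (x : Fin 3 → ℝ) :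
    Vlam (l 0) (l 1) (l 2) ^ (2 * k) * EkA2 k (x 0) (x 1) (x 2) (l 0) (l 1) (l 2)
      = kernelConst k * (exp (-(x 2 * ∑ i, l i)) * orbitIntegral k l l x) := by
  have hV : 0 < Vlam (l 0) (l 1) (l 2) :=
    mul_pos (mul_pos (sub_pos.2 (hl (by decide))) (sub_pos.2 (hl (by decide))))
      (sub_pos.2 (hl (by decide)))
  have hV₀ : Vlam (l 0) (l 1) (l 2) ^ (2 * k) ≠ 0 := (rpow_pos_of_pos hV _).ne'
  have horbit : orbitIntegral k l l x = ∫ n2 in l 2..l 1, ∫ n1 in l 1..l 0,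
      orbitIntegrand k l x (n1, n2) * Wk k (l 0) (l 1) (l 2) n1 n2 :=
    integral_interlacingMeasure hk hl (f := fun n1 n2 ↦ orbitIntegrand k l x (n1, n2))
      (continuous_orbitIntegrand hk l x).continuousOn
  have hexp (n1 n2 : ℝ) : exp ((x 0 + x 1 - 2 * x 2) * (n1 + n2) / 2)
      = exp (-(x 2 * ∑ i, l i)) * exp (meanExponent l x (n1, n2)) := by
    rw [← exp_add, meanExponent]
    ring_nf
  have hneg (n1 n2 : ℝ) : -(x 0 - x 1) / 2 * (n1 - n2) = -rankOneArg x (n1, n2) := by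
    rw [rankOneArg]
    ring
  rw [EkA2, kernelConst, horbit]
  calc _ = 3 * Gamma (3 * k) / Gamma k ^ 2 * ∫ n2 in l 2..l 1, ∫ n1 in l 1..l 0,
        ((n1 - l 1) * (l 0 - n2) * Erk1 k ((x 0 - x 1) / 2) (n1 - n2)
          + (l 0 - n1) * (l 1 - n2) * Erk1 k (-(x 0 - x 1) / 2) (n1 - n2))
        * ((n1 - l 2) * (n2 - l 2)) * exp ((x 0 + x 1 - 2 * x 2) * (n1 + n2) / 2)
        * Wk k (l 0) (l 1) (l 2) n1 n2 := by field_simp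
    _ = _ := by
      rw [mul_assoc (3 * Gamma (3 * k) / _), ← mul_assoc _ (exp _)]
      simp only [← intervalIntegral.integral_const_mul (Gamma (k + 1 / 2) / _ * _ * _),
        Erk1_eq_rankOne, hexp, hneg, orbitIntegrand]
      congr! 5 with _ n1
      rw [rankOneArg]
      ring

lemma Vlam_rpow_mul_EkA2_nonneg (hk : 0 < k) (hl : StrictAnti l) (x : Fin 3 → ℝ) :
    0 ≤ Vlam (l 0) (l 1) (l 2) ^ (2 * k) * EkA2 k (x 0) (x 1) (x 2) (l 0) (l 1) (l 2) := by
  rw [Vlam_rpow_mul_EkA2 hk hl]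
  exact mul_nonneg (kernelConst_pos hk).le (mul_nonneg (exp_pos _).le (integral_nonneg_of_ae
    ((ae_interlacingMeasure_mem_Icc k l).mono fun _ ↦ orbitIntegrand_self_nonneg)))

lemma Vlam_rpow_mul_EkA2_isTheta (hk : 0 < k) :
    (fun p : (Fin 3 → ℝ) × (Fin 3 → ℝ) ↦ Vlam (p.1 0) (p.1 1) (p.1 2) ^ (2 * k)
        * EkA2 k (p.2 0) (p.2 1) (p.2 2) (p.1 0) (p.1 1) (p.1 2))
      =Θ[𝓟 betaPlusDomain]
    fun p ↦ exp ((p.2 0 - p.2 2) * ∑ i, p.1 i) * betaPlusIntegral k p.1 p.2 := by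
  refine EventuallyEq.trans_isTheta
    (eventuallyEq_principal.2 fun p hp ↦ Vlam_rpow_mul_EkA2 hk hp.1 p.2) ?_
  refine (((isTheta_refl (fun p : (Fin 3 → ℝ) × (Fin 3 → ℝ) ↦ exp (-(p.2 2 * ∑ i, p.1 i))) _).mul
    (orbitIntegral_self_isTheta hk)).const_mul_left (kernelConst_pos hk).ne').trans_eventuallyEq
      (.of_eq (funext fun p ↦ ?_))
  rw [← mul_assoc, ← exp_add]
  ring_nf

end Estimate

theorem lemma_beta_plus_general {k : ℝ} (hk : 0 < k) :
    ∃ C, 0 < C ∧ ∀ l x : Fin 3 → ℝ, StrictAnti l → x 2 ≤ x 1 →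
      C⁻¹ * (exp ((x 0 - x 2) * ∑ i, l i) * betaPlusIntegral k l x)
        ≤ Vlam (l 0) (l 1) (l 2) ^ (2 * k) * EkA2 k (x 0) (x 1) (x 2) (l 0) (l 1) (l 2) ∧
      Vlam (l 0) (l 1) (l 2) ^ (2 * k) * EkA2 k (x 0) (x 1) (x 2) (l 0) (l 1) (l 2)
        ≤ C * (exp ((x 0 - x 2) * ∑ i, l i) * betaPlusIntegral k l x) := by
  obtain ⟨C, hC, h⟩ := exists_forall_le_and_le_of_isTheta_principal
    (Vlam_rpow_mul_EkA2_isTheta hk) (fun p hp ↦ Vlam_rpow_mul_EkA2_nonneg hk hp.1 p.2)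
    fun p hp ↦ mul_nonneg (exp_pos _).le (betaPlusIntegral_nonneg hk hp.1 hp.2)
  exact ⟨C, hC, fun l x hl hx ↦ h (l, x) ⟨hl, hx⟩⟩

/-- Lemma 5.x: two-sided estimate for `V(λ)^{2k} E_k(X,λ)`. -/
theorem lemma_beta_plus (k : ℝ) (hk : 0 < k) :
    ∃ C : ℝ, 0 < C ∧ ∀ l1 l2 l3 x1 x2 x3 : ℝ,
      l1 + l2 + l3 = 0 →
      l2 < l1 →
      l3 < l2 →
      x1 + x2 + x3 = 0 →
      x3 ≤ x2 →
      (C⁻¹ * (∫ n2 in l3..l2, ∫ n1 in l2..l1,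
          (n1 - n2) * ((l2 - l3) + (x2 - x3) * (n1 - l3) * (l2 - n2))
            / (1 + (x2 - x3) * (n1 - n2)) ^ (k + 1)
          * ((l1 - n1) * (l1 - n2)) * Real.exp ((x2 - x1) * n1 + (x3 - x1) * n2)
          * Wk k l1 l2 l3 n1 n2)
        ≤ Vlam l1 l2 l3 ^ (2 * k) * EkA2 k x1 x2 x3 l1 l2 l3 ∧
      Vlam l1 l2 l3 ^ (2 * k) * EkA2 k x1 x2 x3 l1 l2 l3
        ≤ C * (∫ n2 in l3..l2, ∫ n1 in l2..l1,
          (n1 - n2) * ((l2 - l3) + (x2 - x3) * (n1 - l3) * (l2 - n2))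
            / (1 + (x2 - x3) * (n1 - n2)) ^ (k + 1)
          * ((l1 - n1) * (l1 - n2)) * Real.exp ((x2 - x1) * n1 + (x3 - x1) * n2)
          * Wk k l1 l2 l3 n1 n2)) := by
  obtain ⟨C, hC, h⟩ := lemma_beta_plus_general hk
  refine ⟨C, hC, fun l1 l2 l3 x1 x2 x3 hl h12 h23 _ hx ↦ ?_⟩
  simpa [betaPlusIntegral, betaPlusIntegrand, Fin.sum_univ_three, hl]
    using h ![l1, l2, l3] ![x1, x2, x3] (by simp [h12, h23]) hx
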